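/- arXiv:2405.05592 — 2 statements merged into one kernel-verified Lean document; each statement's English description precedes it below -/
import Mathlib

section
/- Assume n ≥ 4 and gcd(L, 2·det(2M_F)) = 1, and let Γ ∈ ℤ^{n+1} satisfy F(Γ) ≡ 0 mod L and gcd(Γ₀,…,Γ_n, L) = 1. Then all limits and products below exist, the double sum converges absolutely, and Σ_{γ ∈ (ℤ/Lℤ)^×} Σ_{d ≥ 1, gcd(d,L)=1} μ(d)·d^{−(n−1)}·𝔖(W; L, γ·d̄·Γ) = ∏_{p ∣ L} (1 − p^{−1})·p^{−(n−1)m_p} · ∏_{p ∤ L} (1 − p^{−(n−1)})·σ_p(W), where μ is the Möbius function, d̄ is the inverse of d modulo L, m_p := ord_p(L), and σ_p(W) := lim_{k→∞} p^{−nk}·#{ v ∈ (ℤ/p^kℤ)^{n+1} : F(v) ≡ 0 mod p^k }. -/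
open scoped BigOperators
open Finset Filter Topology Matrix

noncomputable section

namespace Quad

/-- The integral quadratic form `x ↦ xᵀ M_F x` where `N = 2·M_F` is an integer
symmetric matrix with even diagonal, so that the value `(xᵀ N x)/2` is an integer. -/
def Fint {m : ℕ} (N : Matrix (Fin m) (Fin m) ℤ) (x : Fin m → ℤ) : ℤ :=
  (∑ i, ∑ j, N i j * x i * x j) / 2

/-- The corresponding real quadratic form `x ↦ xᵀ M_F x`, `N = 2·M_F`. -/
def FR {m : ℕ} (N : Matrix (Fin m) (Fin m) ℤ) (x : Fin m → ℝ) : ℝ :=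
  (∑ i, ∑ j, (N i j : ℝ) * x i * x j) / 2

/-- The real quadratic form attached to a real matrix. -/
def QFR {m : ℕ} (A : Matrix (Fin m) (Fin m) ℝ) (x : Fin m → ℝ) : ℝ :=
  ∑ i, ∑ j, A i j * x i * x j

/-- The gradient `∇F(x) = 2 M_F x = N x`. -/
def grad {m : ℕ} (N : Matrix (Fin m) (Fin m) ℤ) (x : Fin m → ℤ) : Fin m → ℤ :=
  fun i => ∑ j, N i j * x j

/-- `H_{λ,L}(y) = F(λ)/L + ∇F(λ)·y` (assuming `L ∣ F(λ)`). -/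
def Hpoly {m : ℕ} (N : Matrix (Fin m) (Fin m) ℤ) (L : ℕ) (lam y : Fin m → ℤ) : ℤ :=
  Fint N lam / (L : ℤ) + ∑ i, grad N lam i * y i

/-- The additive character `e_q(t) = exp(2πit/q)`. -/
def eChar (q : ℕ) (t : ℝ) : ℂ := Complex.exp (2 * Real.pi * Complex.I * (t : ℂ) / (q : ℂ))

/-- The dual form value `N_F(c) = cᵀ · adj(N) · c`, `N = 2 M_F`; this equals `2ⁿ F*(c)`. -/
def dualF {m : ℕ} (N : Matrix (Fin m) (Fin m) ℤ) (c : Fin m → ℤ) : ℤ :=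
  ∑ i, ∑ j, N.adjugate i j * c i * c j

/-- The embedding sending the `i`-th of the `n-1` variables of `F₂` to coordinate `i+2`. -/
def emb {n : ℕ} (i : Fin (n-1)) : Fin (n+1) := ⟨i.val + 2, by have h := i.isLt; omega⟩

/-- The quadratic Gauss sum `ι_q = Σ_{x mod q} e_q(x²)`. -/
def iotaSum (q : ℕ) : ℂ := ∑ x ∈ Finset.range q, eChar q ((x : ℝ)^2)

open Classical in
/-- The exponential sum `S_{q,L,λ}(c)`. -/
def Sq (n : ℕ) (N : Matrix (Fin (n+1)) (Fin (n+1)) ℤ) (q L : ℕ)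
    (lam c : Fin (n+1) → ℤ) : ℂ :=
  ∑ a ∈ (Finset.range q).filter (fun a => Nat.gcd a q = 1),
    ∑ σ ∈ (Finset.univ : Finset (Fin (n+1) → Fin (q*L))).filter
        (fun σ => (L : ℤ) ∣ Hpoly N L lam (fun i => ((σ i : ℕ) : ℤ))),
      eChar (q*L)
        (((a : ℤ) * (Hpoly N L lam (fun i => ((σ i : ℕ) : ℤ))
            + (L : ℤ) * Fint N (fun i => ((σ i : ℕ) : ℤ)))
          + ∑ i, c i * ((σ i : ℕ) : ℤ) : ℤ) : ℝ)

/-- The good-modulus factor `S⁽¹⁾_{q,L,λ}(c)` (for `q = q₁q₂`, `gcd(q₁,2LD) = 1`). -/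
def S1 (n : ℕ) (N : Matrix (Fin (n+1)) (Fin (n+1)) ℤ) (q₁ q₂ L : ℕ) (k₁ : ℤ)
    (lam c : Fin (n+1) → ℤ) : ℂ :=
  ∑ σ : Fin (n+1) → Fin q₁,
    ∑ a ∈ (Finset.range q₁).filter (fun a => Nat.gcd a q₁ = 1),
      eChar q₁
        (((a : ℤ) * (((q₂ : ℤ) * (L : ℤ))^2 * Fint N (fun i => ((σ i : ℕ) : ℤ))
              + (q₂ : ℤ) * ((∑ i, grad N lam i * ((σ i : ℕ) : ℤ)) + k₁))
          + ∑ i, c i * ((σ i : ℕ) : ℤ) : ℤ) : ℝ)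

open Classical in
/-- The bad-modulus factor `S⁽²⁾_{q,L,λ}(c)`. -/
def S2 (n : ℕ) (N : Matrix (Fin (n+1)) (Fin (n+1)) ℤ) (q₁ q₂ L : ℕ) (k₂ : ℤ)
    (lam c : Fin (n+1) → ℤ) : ℂ :=
  ∑ σ ∈ (Finset.univ : Finset (Fin (n+1) → Fin (q₂*L))).filter
      (fun σ => (L : ℤ) ∣ Hpoly N L lam (fun i => (q₁ : ℤ) * ((σ i : ℕ) : ℤ))),
    ∑ a ∈ (Finset.range q₂).filter (fun a => Nat.gcd a q₂ = 1),
      eChar (q₂*L)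
        (((a : ℤ) * ((q₁ : ℤ)^2 * (L : ℤ) * Fint N (fun i => ((σ i : ℕ) : ℤ))
              + (q₁ : ℤ) * ((∑ i, grad N lam i * ((σ i : ℕ) : ℤ)) + k₂))
          + ∑ i, c i * ((σ i : ℕ) : ℤ) : ℤ) : ℝ)

/-- The complete quadratic exponential sum `T_q(G,m;c)`. -/
def Tq (n : ℕ) (NG : Matrix (Fin (n+1)) (Fin (n+1)) ℤ) (q : ℕ) (m : ℤ)
    (c : Fin (n+1) → ℤ) : ℂ :=
  ∑ a ∈ (Finset.range q).filter (fun a => Nat.gcd a q = 1),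
    ∑ b : Fin (n+1) → Fin q,
      eChar q (((a : ℤ) * (Fint NG (fun i => ((b i : ℕ) : ℤ)) - m)
        + ∑ i, c i * ((b i : ℕ) : ℤ) : ℤ) : ℝ)

/-- The counting function whose normalised limit is the local density
`σ_p(W;L,λ)`: the number of `v ∈ (ℤ/p^kℤ)^{n+1}` with `F(v) ≡ 0 mod p^k` and
`v ≡ λ mod p^{ord_p L}`. -/
def localCount (n : ℕ) (N : Matrix (Fin (n+1)) (Fin (n+1)) ℤ) (L : ℕ)
    (lam : Fin (n+1) → ℤ) (p k : ℕ) : ℕ :=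
  Nat.card {v : Fin (n+1) → Fin (p^k) //
    ((p : ℤ)^k ∣ Fint N (fun i => ((v i : ℕ) : ℤ))) ∧
    ∀ i, (p : ℤ)^(padicValNat p L) ∣ ((v i : ℕ) : ℤ) - lam i}

/-- The coordinates `t(x) = Mx` of an integer vector. -/
def tmap (n : ℕ) (M : Matrix (Fin (n+1)) (Fin (n+1)) ℝ) (x : Fin (n+1) → ℤ) :
    Fin (n+1) → ℝ :=
  M.mulVec (fun i => (x i : ℝ))

/-- The counting function `N_W((R,ξ),(L,Γ);B)` for the affine cone. -/
def NW (n : ℕ) (N : Matrix (Fin (n+1)) (Fin (n+1)) ℤ)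
    (M : Matrix (Fin (n+1)) (Fin (n+1)) ℝ) (a b : Fin (n+1) → ℝ)
    (B R : ℝ) (L : ℕ) (Γ : Fin (n+1) → ℤ) : ℕ :=
  Nat.card {x : Fin (n+1) → ℤ //
    x ≠ 0 ∧ Fint N x = 0 ∧ (∀ i, (L : ℤ) ∣ x i - Γ i) ∧
    tmap n M x 0 ≠ 0 ∧
    (∀ j : Fin (n+1), 2 ≤ j.val →
      a j ≤ R * (tmap n M x j / tmap n M x 0) ∧ R * (tmap n M x j / tmap n M x 0) ≤ b j) ∧
    (∀ i, |tmap n M x i| ≤ B)}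

/-- Twice the counting function `N_V((R,ξ),(L,Λ);B)` for the projective quadric:
the number of primitive integer vectors on the cone, in the real zoom region,
of height at most `B`, congruent mod `L` to a unit multiple of `Γ`. -/
def NV (n : ℕ) (N : Matrix (Fin (n+1)) (Fin (n+1)) ℤ)
    (M : Matrix (Fin (n+1)) (Fin (n+1)) ℝ) (a b : Fin (n+1) → ℝ)
    (B R : ℝ) (L : ℕ) (Γ : Fin (n+1) → ℤ) : ℕ :=
  Nat.card {x : Fin (n+1) → ℤ //
    Finset.univ.gcd x = 1 ∧ Fint N x = 0 ∧
    tmap n M x 0 ≠ 0 ∧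
    (∀ j : Fin (n+1), 2 ≤ j.val →
      a j ≤ R * (tmap n M x j / tmap n M x 0) ∧ R * (tmap n M x j / tmap n M x 0) ≤ b j) ∧
    (∀ i, |tmap n M x i| ≤ B) ∧
    (∃ γ : (ZMod L)ˣ, ∀ i, ((x i : ZMod L)) = (γ : ZMod L) * ((Γ i : ZMod L)))}

/-- The value of the singular integral `I_R` for `R ≥ R₀`. -/
def IRval (n : ℕ) (M : Matrix (Fin (n+1)) (Fin (n+1)) ℝ) (a b : Fin (n+1) → ℝ)
    (R : ℝ) : ℝ :=
  2 * (∏ j ∈ Finset.univ.filter (fun j : Fin (n+1) => 2 ≤ j.val), (b j - a j))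
    / (((n : ℝ) - 1) * |M.det| * R^(n-1))

/-- The error exponent factor `E_τ(B)`. -/
def Etau (n : ℕ) (τ B : ℝ) : ℝ :=
  if 5 ≤ n then B ^ (-(((n : ℝ) - 3) * τ / (5 * (n : ℝ) - 7)))
  else B ^ (-(2 * τ / 17))

/-- The error factor `E_τ(1;B)` from the upper-bound range `-1 < τ < 1`. -/
def Etau1 (n : ℕ) (τ B : ℝ) : ℝ :=
  if 5 ≤ n then B ^ (-(((n : ℝ) - 3) * τ / 2))
  else B ^ (-τ) + B ^ (-((1 + τ)/4))

end Quad
namespace Quad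

/-- The quadratic form `x ↦ xᵀ A x`. -/
def qf {m : ℕ} {R : Type*} [CommRing R] (A : Matrix (Fin m) (Fin m) R) (x : Fin m → R) : R :=
  x ⬝ᵥ (A *ᵥ x)

lemma qf_add {m : ℕ} {R : Type*} [CommRing R] (A : Matrix (Fin m) (Fin m) R) (x h : Fin m → R) :
    qf A (x + h) = qf A x + qf A h + ((A + Aᵀ) *ᵥ h) ⬝ᵥ x := by
  unfold qf
  rw [mulVec_add, dotProduct_add, add_dotProduct, add_dotProduct, add_mulVec, add_dotProduct,
    mulVec_transpose, ← dotProduct_mulVec, dotProduct_comm (A *ᵥ h) x]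
  ring

lemma qf_map {m : ℕ} {R S : Type*} [CommRing R] [CommRing S] (f : R →+* S)
    (A : Matrix (Fin m) (Fin m) R) (x : Fin m → R) :
    f (qf A x) = qf (A.map f) (fun i => f (x i)) := by
  unfold qf
  simp [dotProduct, mulVec, map_sum]

lemma qf_smul {m : ℕ} {R : Type*} [CommRing R] (A : Matrix (Fin m) (Fin m) R) (c : R)
    (x : Fin m → R) : qf (c • A) x = c * qf A x := by
  unfold qf
  rw [smul_mulVec, dotProduct_smul, smul_eq_mul]

lemma exists_half {m : ℕ} (N : Matrix (Fin m) (Fin m) ℤ) (hNsym : N.IsSymm)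
    (hNeven : ∀ i, Even (N i i)) : ∃ A : Matrix (Fin m) (Fin m) ℤ, N = A + Aᵀ := by
  refine ⟨Matrix.of fun i j => if i < j then N i j else if i = j then N i i / 2 else 0, ?_⟩
  ext i j
  have hs : N j i = N i j := hNsym.apply i j
  simp only [Matrix.add_apply, transpose_apply, Matrix.of_apply]
  rcases lt_trichotomy i j with h | h | h
  · simp [h, h.not_gt, h.ne']
  · subst h
    obtain ⟨r, hr⟩ := hNeven i
    simp only [lt_irrefl, if_false, if_true]
    omega
  · simp [h, h.not_gt, h.ne', hs]

lemma sum_char {m : ℕ} {R : Type*} [CommRing R] [Fintype R] (ψ : AddChar R ℂ)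
    (hψ : ψ.IsPrimitive) (c : Fin m → R) (hc : c ≠ 0) :
    ∑ w : Fin m → R, ψ (c ⬝ᵥ w) = 0 := by
  classical
  let χ : AddChar (Fin m → R) ℂ :=
    { toFun := fun w => ψ (c ⬝ᵥ w)
      map_zero_eq_one' := by simp
      map_add_eq_mul' := fun a b => by rw [dotProduct_add, AddChar.map_add_eq_mul] }
  have : χ ≠ 1 := by
    obtain ⟨i, hi⟩ := Function.ne_iff.mp hc
    have h1 := hψ hi
    intro h
    apply h1
    ext r
    have := DFunLike.congr_fun h (Pi.single i r)
    simpa [χ, AddChar.mulShift_apply] using this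
  exact AddChar.sum_eq_zero_of_ne_one this

open Classical in
lemma weyl {m : ℕ} {R : Type*} [CommRing R] [Fintype R] (ψ : AddChar R ℂ)
    (hψ : ψ.IsPrimitive) (A : Matrix (Fin m) (Fin m) R) :
    ‖∑ v : Fin m → R, ψ (qf A v)‖ ^ 2 ≤
      (Fintype.card R : ℝ) ^ m * #{h : Fin m → R | (A + Aᵀ) *ᵥ h = 0} := by
  have key : (∑ v : Fin m → R, ψ (qf A v)) * (starRingEnd ℂ) (∑ v : Fin m → R, ψ (qf A v))
      = ∑ h : Fin m → R, ψ (qf A h) *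
          (if (A + Aᵀ) *ᵥ h = 0 then ((Fintype.card R : ℂ)) ^ m else 0) := by
    have h1 : ∀ h : Fin m → R,
        (if (A + Aᵀ) *ᵥ h = 0 then ((Fintype.card R : ℂ)) ^ m else 0)
          = ∑ w : Fin m → R, ψ (((A + Aᵀ) *ᵥ h) ⬝ᵥ w) := by
      intro h
      split_ifs with hh
      · rw [hh]; simp
      · rw [sum_char ψ hψ _ hh]
    simp_rw [h1, map_sum, ← AddChar.map_neg_eq_conj, Finset.mul_sum, Finset.sum_mul]
    rw [Finset.sum_comm, Finset.sum_comm (s := (univ : Finset (Fin m → R)))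
      (f := fun h w => ψ (qf A h) * ψ (((A + Aᵀ) *ᵥ h) ⬝ᵥ w)), Finset.sum_comm]
    refine Finset.sum_congr rfl fun w _ => ?_
    rw [← Equiv.sum_comp (Equiv.addLeft w)]
    refine Finset.sum_congr rfl fun h _ => ?_
    rw [← AddChar.map_add_eq_mul, ← AddChar.map_add_eq_mul]
    congr 1
    simp only [Equiv.coe_addLeft]
    rw [qf_add]; ring
  have h2 : ((‖∑ v : Fin m → R, ψ (qf A v)‖ ^ 2 : ℝ) : ℂ) = ∑ h : Fin m → R, ψ (qf A h) *
          (if (A + Aᵀ) *ᵥ h = 0 then ((Fintype.card R : ℂ)) ^ m else 0) := by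
    rw [← key, Complex.mul_conj, Complex.normSq_eq_norm_sq]
  have h3 : ‖∑ v : Fin m → R, ψ (qf A v)‖ ^ 2 = ‖∑ h : Fin m → R, ψ (qf A h) *
          (if (A + Aᵀ) *ᵥ h = 0 then ((Fintype.card R : ℂ)) ^ m else 0)‖ := by
    rw [← h2, Complex.norm_real, Real.norm_of_nonneg (by positivity)]
  rw [h3]
  refine (norm_sum_le _ _).trans ?_
  rw [Finset.card_filter]
  push_cast
  rw [Finset.mul_sum]
  refine Finset.sum_le_sum fun h _ => ?_
  rw [norm_mul, AddChar.norm_apply, one_mul]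
  split_ifs <;> simp

open Classical in
lemma ker_card_le {m q : ℕ} [NeZero q] (B : Matrix (Fin m) (Fin m) ℤ) (hD : B.det ≠ 0) :
    #{h : Fin m → ZMod q | B.map (Int.cast : ℤ → ZMod q) *ᵥ h = 0} ≤ B.det.natAbs ^ m := by
  have h1 : ∀ h : Fin m → ZMod q, B.map (Int.cast : ℤ → ZMod q) *ᵥ h = 0 →
      ∀ i, B.det.natAbs • h i = 0 := by
    intro h hh i
    have h2 : (B.map (Int.cast : ℤ → ZMod q)).adjugate *ᵥ (B.map (Int.cast : ℤ → ZMod q) *ᵥ h) = 0 := by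
      rw [hh, mulVec_zero]
    rw [mulVec_mulVec, adjugate_mul, smul_mulVec, one_mulVec] at h2
    have h3 := congrFun h2 i
    have h4 : (B.map (Int.cast : ℤ → ZMod q)).det = (B.det : ZMod q) :=
      ((Int.castRingHom (ZMod q)).map_det B).symm
    rw [h4] at h3
    simp only [Pi.smul_apply, smul_eq_mul, Pi.zero_apply] at h3
    rcases Int.natAbs_eq B.det with h5 | h5
    · rw [nsmul_eq_mul]; rw [h5] at h3; simpa using h3
    · rw [nsmul_eq_mul]; rw [h5] at h3; simpa using h3
  calc _ ≤ #(Fintype.piFinset fun _ : Fin m => ({x : ZMod q | B.det.natAbs • x = 0} : Finset _)) := by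
        apply Finset.card_le_card
        intro h hh
        simp only [Fintype.mem_piFinset, Finset.mem_filter, Finset.mem_univ, true_and] at hh ⊢
        exact h1 h hh
    _ ≤ _ := by
        rw [Fintype.card_piFinset]
        simp only [Finset.prod_const, Finset.card_univ, Fintype.card_fin]
        exact Nat.pow_le_pow_left (IsAddCyclic.card_nsmul_eq_zero_le (Int.natAbs_pos.2 hD)) m

open Classical in
lemma ker_card_le_one {m q : ℕ} [NeZero q] (B : Matrix (Fin m) (Fin m) ℤ)
    (hD : IsUnit (B.det : ZMod q)) :
    #{h : Fin m → ZMod q | B.map (Int.cast : ℤ → ZMod q) *ᵥ h = 0} ≤ 1 := by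
  rw [Finset.card_le_one]
  have h4 : (B.map (Int.cast : ℤ → ZMod q)).det = (B.det : ZMod q) :=
      ((Int.castRingHom (ZMod q)).map_det B).symm
  have hu : IsUnit (B.map (Int.cast : ℤ → ZMod q)) := by
    rw [Matrix.isUnit_iff_isUnit_det, h4]; exact hD
  intro a ha b hb
  simp only [Finset.mem_filter, Finset.mem_univ, true_and] at ha hb
  exact Matrix.mulVec_injective_of_isUnit hu (ha.trans hb.symm)

lemma card_fiber {G H : Type*} [AddGroup G] [AddGroup H] [Finite G] [Finite H] (f : G →+ H)
    (hf : Function.Surjective f) (h : H) :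
    Nat.card {g // f g = h} * Nat.card H = Nat.card G := by
  obtain ⟨g0, hg0⟩ := hf h
  have e : {g // f g = h} ≃ f.ker :=
    { toFun := fun g => ⟨g.1 - g0, by simp [AddMonoidHom.mem_ker, g.2, hg0]⟩
      invFun := fun g => ⟨g.1 + g0, by have := g.2; rw [AddMonoidHom.mem_ker] at this; simp [this, hg0]⟩
      left_inv := fun g => by simp
      right_inv := fun g => by simp }
  rw [Nat.card_congr e, ← AddSubgroup.card_mul_index f.ker, AddSubgroup.index_ker]
  congr 1
  rw [AddMonoidHom.range_eq_top.2 hf]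
  simp

lemma card_pullback {G H : Type*} [AddGroup G] [AddGroup H] [Finite G] [Finite H] (f : G →+ H)
    (hf : Function.Surjective f) (P : H → Prop) :
    Nat.card {g // P (f g)} * Nat.card H = Nat.card {h // P h} * Nat.card G := by
  classical
  have e : {g // P (f g)} ≃ Σ h : {h // P h}, {g // f g = h.1} :=
    { toFun := fun g => ⟨⟨f g.1, g.2⟩, ⟨g.1, rfl⟩⟩
      invFun := fun x => ⟨x.2.1, by rw [x.2.2]; exact x.1.2⟩
      left_inv := fun g => rfl
      right_inv := by rintro ⟨⟨h, hh⟩, ⟨g, hg⟩⟩; simp only at hg; subst hg; rfl }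
  have := Fintype.ofFinite {h // P h}
  rw [Nat.card_congr e, Nat.card_sigma, Finset.sum_mul]
  simp_rw [card_fiber f hf]
  simp [Nat.card_eq_fintype_card]

/-- Number of zeros of the form attached to `A` modulo `p ^ k`. -/
def cnt {m : ℕ} (A : Matrix (Fin m) (Fin m) ℤ) (p k : ℕ) : ℕ :=
  Nat.card {v : Fin m → ZMod (p ^ k) // qf (A.map (Int.cast : ℤ → ZMod (p ^ k))) v = 0}

lemma isUnit_iff_cast {p j k : ℕ} (hp : p.Prime) (hj : 1 ≤ j) (hjk : j ≤ k) (x : ZMod (p ^ k)) :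
    IsUnit (ZMod.castHom (pow_dvd_pow p hjk) (ZMod (p ^ j)) x) ↔ IsUnit x := by
  have : NeZero (p ^ k) := ⟨pow_ne_zero _ hp.ne_zero⟩
  obtain ⟨a, rfl⟩ : ∃ a : ℕ, (a : ZMod (p ^ k)) = x := ⟨x.val, ZMod.natCast_zmod_val x⟩
  rw [map_natCast, ZMod.isUnit_iff_coprime, ZMod.isUnit_iff_coprime,
    Nat.coprime_pow_right_iff (by omega), Nat.coprime_pow_right_iff (by omega)]

lemma mul_p_iff {p k : ℕ} (hp : p.Prime) (x : ZMod (p ^ (k + 1))) :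
    (p : ZMod (p ^ (k + 1))) * x = 0 ↔
      ZMod.castHom (pow_dvd_pow p (Nat.le_succ k)) (ZMod (p ^ k)) x = 0 := by
  have : NeZero (p ^ (k + 1)) := ⟨pow_ne_zero _ hp.ne_zero⟩
  obtain ⟨a, rfl⟩ : ∃ a : ℕ, (a : ZMod (p ^ (k + 1))) = x := ⟨x.val, ZMod.natCast_zmod_val x⟩
  rw [map_natCast, ← Nat.cast_mul, ZMod.natCast_eq_zero_iff, ZMod.natCast_eq_zero_iff, pow_succ',
    Nat.mul_dvd_mul_iff_left hp.pos]

lemma isUnit_iff_castp {p k : ℕ} (hp : p.Prime) (x : ZMod (p ^ (k + 1))) :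
    ¬ IsUnit x ↔ ZMod.castHom (dvd_pow_self p k.succ_ne_zero) (ZMod p) x = 0 := by
  have : NeZero (p ^ (k + 1)) := ⟨pow_ne_zero _ hp.ne_zero⟩
  obtain ⟨a, rfl⟩ : ∃ a : ℕ, (a : ZMod (p ^ (k + 1))) = x := ⟨x.val, ZMod.natCast_zmod_val x⟩
  rw [map_natCast, ZMod.isUnit_iff_coprime,
    Nat.coprime_pow_right_iff (by omega), ZMod.natCast_eq_zero_iff, Nat.coprime_comm,
    hp.coprime_iff_not_dvd, not_not]

open Classical in
lemma nonunit_sum {p k : ℕ} (hp : p.Prime) [NeZero (p ^ (k + 1))]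
    (ψ : AddChar (ZMod (p ^ (k + 1))) ℂ) (hψ : ψ.IsPrimitive) (t : ZMod (p ^ (k + 1))) :
    ∑ b with ¬ IsUnit b, ψ (b * t) = if (p : ZMod (p ^ (k + 1))) * t = 0 then (p : ℂ) ^ k else 0 := by
  have : NeZero p := ⟨hp.ne_zero⟩
  split_ifs with ht
  · have h1 : ∀ b ∈ (univ : Finset (ZMod (p ^ (k + 1)))).filter (fun b => ¬ IsUnit b),
        ψ (b * t) = 1 := by
      intro b hb
      rw [Finset.mem_filter, isUnit_iff_castp hp] at hb
      replace hb := hb.2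
      obtain ⟨a, rfl⟩ : ∃ a : ℕ, (a : ZMod (p ^ (k + 1))) = b := ⟨b.val, ZMod.natCast_zmod_val b⟩
      rw [map_natCast, ZMod.natCast_eq_zero_iff] at hb
      obtain ⟨c, rfl⟩ := hb
      have : ((p * c : ℕ) : ZMod (p ^ (k + 1))) * t = 0 := by
        push_cast
        rw [mul_right_comm, ht, zero_mul]
      rw [this, AddChar.map_zero_eq_one]
    rw [Finset.sum_congr rfl h1, Finset.sum_const, nsmul_eq_mul, mul_one]
    have h2 := card_fiber (ZMod.castHom (dvd_pow_self p k.succ_ne_zero) (ZMod p)).toAddMonoidHom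
      (ZMod.ringHom_surjective _) 0
    have h3 : #(univ.filter fun b : ZMod (p ^ (k + 1)) => ¬ IsUnit b) =
        Nat.card {g // (ZMod.castHom (dvd_pow_self p k.succ_ne_zero) (ZMod p)).toAddMonoidHom g = 0} := by
      rw [Nat.card_eq_fintype_card, Fintype.card_subtype]
      congr 1
      ext b
      simp only [Finset.mem_filter, Finset.mem_univ, true_and, isUnit_iff_castp hp]
      rfl
    rw [← h3, Nat.card_zmod, Nat.card_zmod] at h2
    rw [Nat.eq_of_mul_eq_mul_right hp.pos (h2.trans (pow_succ p k))]
    push_cast; rfl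
  · have h1 := hψ ht
    obtain ⟨r, hr⟩ : ∃ r, ψ ((p : ZMod (p ^ (k + 1))) * t * r) ≠ 1 := by
      by_contra! hcon
      apply h1
      ext r
      simpa [AddChar.mulShift_apply] using hcon r
    have h2 : ∑ b with ¬ IsUnit b, ψ (b * t) =
        ∑ b with ¬ IsUnit b, ψ (b * t) * ψ ((p : ZMod (p ^ (k + 1))) * t * r) := by
      symm
      refine Finset.sum_equiv (Equiv.addRight ((p : ZMod (p ^ (k + 1))) * r)) ?_ ?_
      · intro b
        simp only [Finset.mem_filter, Finset.mem_univ, true_and, isUnit_iff_castp hp]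
        simp
      · intro b _
        rw [← AddChar.map_add_eq_mul]
        congr 1
        simp only [Equiv.coe_addRight]
        ring
    rw [← Finset.sum_mul] at h2
    by_contra h0
    apply hr
    exact mul_left_cancel₀ h0 (by rw [← h2, mul_one])

lemma cnt_lift {m : ℕ} (A : Matrix (Fin m) (Fin m) ℤ) {p : ℕ} (hp : p.Prime) (k : ℕ) :
    Nat.card {v : Fin m → ZMod (p ^ (k + 1)) // (p : ZMod (p ^ (k + 1))) *
      qf (A.map (Int.cast : ℤ → ZMod (p ^ (k + 1)))) v = 0} = p ^ m * cnt A p k := by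
  have : NeZero (p ^ (k + 1)) := ⟨pow_ne_zero _ hp.ne_zero⟩
  have : NeZero (p ^ k) := ⟨pow_ne_zero _ hp.ne_zero⟩
  let π := ZMod.castHom (pow_dvd_pow p (Nat.le_succ k)) (ZMod (p ^ k))
  have hπ : Function.Surjective π := ZMod.ringHom_surjective _
  let f : (Fin m → ZMod (p ^ (k + 1))) →+ (Fin m → ZMod (p ^ k)) :=
    π.toAddMonoidHom.compLeft (Fin m)
  have hf : Function.Surjective f := by
    intro y
    choose g hg using fun i => hπ (y i)
    exact ⟨g, funext hg⟩
  have h1 := card_pullback f hf (fun v => qf (A.map (Int.cast : ℤ → ZMod (p ^ k))) v = 0)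
  have h2 : ∀ v : Fin m → ZMod (p ^ (k + 1)), (p : ZMod (p ^ (k + 1))) *
      qf (A.map (Int.cast : ℤ → ZMod (p ^ (k + 1)))) v = 0 ↔
      qf (A.map (Int.cast : ℤ → ZMod (p ^ k))) (f v) = 0 := by
    intro v
    rw [mul_p_iff hp, qf_map, Matrix.map_map]
    have : (⇑(ZMod.castHom (pow_dvd_pow p (Nat.le_succ k)) (ZMod (p ^ k))) ∘ Int.cast : ℤ → ZMod (p ^ k)) = Int.cast := by
      ext z; simp
    rw [this]
    rfl
  rw [Nat.card_congr (Equiv.subtypeEquivRight h2)]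
  unfold cnt
  simp only [Nat.card_fun, Nat.card_zmod, Nat.card_eq_fintype_card (α := Fin m), Fintype.card_fin] at h1
  have : 0 < (p ^ k) ^ m := by have := hp.pos; positivity
  apply Nat.eq_of_mul_eq_mul_right this
  rw [h1, pow_succ, mul_pow]
  ring

open Classical in
lemma cnt_rec {m : ℕ} (A : Matrix (Fin m) (Fin m) ℤ) {p : ℕ} (hp : p.Prime) (k : ℕ) (C : ℝ)
    [NeZero (p ^ (k + 1))]
    (hC : (#{h : Fin m → ZMod (p ^ (k + 1)) |
      (A + Aᵀ).map (Int.cast : ℤ → ZMod (p ^ (k + 1))) *ᵥ h = 0} : ℝ) ≤ C) :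
    |(p : ℝ) ^ (k + 1) * cnt A p (k + 1) - (p : ℝ) ^ k * (p ^ m * cnt A p k)| ≤
      (p : ℝ) ^ (k + 1) * √(((p : ℝ) ^ (k + 1)) ^ m * C) := by
  set q := p ^ (k + 1) with hq
  let ψ : AddChar (ZMod q) ℂ := ZMod.stdAddChar
  have hψ : ψ.IsPrimitive := ZMod.isPrimitive_stdAddChar q
  set A' := A.map (Int.cast : ℤ → ZMod q) with hA'
  have hcA : ∑ v : Fin m → ZMod q, ∑ b : ZMod q, ψ (b * qf A' v) = (q : ℂ) * cnt A p (k + 1) := by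
    simp_rw [AddChar.sum_mulShift _ hψ]
    unfold cnt
    rw [Nat.card_eq_fintype_card, Fintype.card_subtype, Finset.card_filter]
    push_cast
    rw [Finset.mul_sum]
    refine Finset.sum_congr rfl fun v _ => ?_
    rw [ZMod.card]
    simp [hA', hq]
  have hcB : ∑ v : Fin m → ZMod q, ∑ b with ¬ IsUnit b, ψ (b * qf A' v) =
      (p : ℂ) ^ k * (p ^ m * cnt A p k) := by
    rw [Finset.sum_congr rfl fun v _ => nonunit_sum hp ψ hψ (qf A' v)]
    have := cnt_lift A hp k
    rw [Nat.card_eq_fintype_card, Fintype.card_subtype, Finset.card_filter] at this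
    have h2 := congrArg (Nat.cast : ℕ → ℂ) this
    push_cast at h2
    rw [← h2, Finset.mul_sum]
    refine Finset.sum_congr rfl fun v _ => ?_
    simp [hA', hq]
  have hsplit : ∑ b with IsUnit b, ∑ v : Fin m → ZMod q, ψ (b * qf A' v) =
      (q : ℂ) * cnt A p (k + 1) - (p : ℂ) ^ k * (p ^ m * cnt A p k) := by
    rw [Finset.sum_comm, ← hcA, ← hcB, ← Finset.sum_sub_distrib]
    refine Finset.sum_congr rfl fun v _ => ?_
    rw [eq_sub_iff_add_eq]
    exact Finset.sum_filter_add_sum_filter_not _ _ _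
  have hb : ∀ b ∈ (univ : Finset (ZMod q)).filter (fun b => IsUnit b),
      ‖∑ v : Fin m → ZMod q, ψ (b * qf A' v)‖ ≤ √((q : ℝ) ^ m * C) := by
    intro b hb
    have hu : IsUnit b := (Finset.mem_filter.1 hb).2
    have h1 := weyl ψ hψ (b • A')
    simp_rw [qf_smul] at h1
    have h2 : ∀ h : Fin m → ZMod q, (b • A' + (b • A')ᵀ) *ᵥ h = 0 ↔
        (A + Aᵀ).map (Int.cast : ℤ → ZMod q) *ᵥ h = 0 := by
      intro h
      have : b • A' + (b • A')ᵀ = b • (A + Aᵀ).map (Int.cast : ℤ → ZMod q) := by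
        ext i j
        simp [hA', mul_add]
      rw [this, smul_mulVec, hu.smul_eq_zero]
    simp_rw [h2] at h1
    rw [ZMod.card] at h1
    apply Real.le_sqrt_of_sq_le
    exact h1.trans (by gcongr)
  have hnorm : ‖(q : ℂ) * cnt A p (k + 1) - (p : ℂ) ^ k * (p ^ m * cnt A p k)‖ ≤
      (q : ℝ) * √((q : ℝ) ^ m * C) := by
    rw [← hsplit]
    refine (norm_sum_le_of_le _ hb).trans ?_
    rw [Finset.sum_const, nsmul_eq_mul]
    gcongr
    calc _ ≤ #(univ : Finset (ZMod q)) := Finset.card_filter_le _ _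
      _ = q := by rw [Finset.card_univ, ZMod.card]
  have h3 : ((q : ℂ) * cnt A p (k + 1) - (p : ℂ) ^ k * (p ^ m * cnt A p k)) =
    (((p : ℝ) ^ (k + 1) * cnt A p (k + 1) - (p : ℝ) ^ k * (p ^ m * cnt A p k) : ℝ) : ℂ) := by
    rw [hq]; push_cast; rfl
  rw [h3, Complex.norm_real, Real.norm_eq_abs] at hnorm
  have h4 : (q : ℝ) = (p : ℝ) ^ (k + 1) := by rw [hq]; push_cast; rfl
  rw [h4] at hnorm
  exact hnorm

lemma cnt_step {n : ℕ} (hn : 4 ≤ n) (A : Matrix (Fin (n + 1)) (Fin (n + 1)) ℤ) {p : ℕ}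
    (hp : p.Prime) (k : ℕ) (C : ℝ)
    (h : |(p : ℝ) ^ (k + 1) * cnt A p (k + 1) - (p : ℝ) ^ k * (p ^ (n + 1) * cnt A p k)| ≤
      (p : ℝ) ^ (k + 1) * √(((p : ℝ) ^ (k + 1)) ^ (n + 1) * C)) :
    dist ((cnt A p k : ℝ) / (p : ℝ) ^ (n * k)) ((cnt A p (k + 1) : ℝ) / (p : ℝ) ^ (n * (k + 1))) ≤
      (√C * ((√p) ^ 3)⁻¹) * (((√p) ^ 3)⁻¹) ^ k := by
  have hp0 : (0 : ℝ) < p := by exact_mod_cast hp.pos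
  have hp1 : (1 : ℝ) ≤ √p := by
    rw [Real.one_le_sqrt]; exact_mod_cast hp.one_lt.le
  set s := √(p : ℝ) with hs
  have hsp : (p : ℝ) = s ^ 2 := (Real.sq_sqrt hp0.le).symm
  have hs0 : 0 < s := by linarith
  have e1 : √(((p : ℝ) ^ (k + 1)) ^ (n + 1) * C) = (s ^ (k + 1)) ^ (n + 1) * √C := by
    rw [Real.sqrt_mul (by positivity)]
    congr 1
    rw [hsp, show ((s ^ 2) ^ (k + 1)) ^ (n + 1) = ((s ^ (k + 1)) ^ (n + 1)) ^ 2 by ring,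
      Real.sqrt_sq (by positivity)]
  rw [e1] at h
  have e2 : (cnt A p k : ℝ) / (p : ℝ) ^ (n * k) - (cnt A p (k + 1) : ℝ) / (p : ℝ) ^ (n * (k + 1)) =
      - ((p : ℝ) ^ (k + 1) * cnt A p (k + 1) - (p : ℝ) ^ k * (p ^ (n + 1) * cnt A p k)) /
        ((p : ℝ) ^ (k + 1)) ^ (n + 1) := by
    field_simp
    ring
  rw [Real.dist_eq, e2, abs_div, abs_neg, abs_of_pos (a := ((p : ℝ) ^ (k + 1)) ^ (n + 1)) (by positivity),
    div_le_iff₀ (by positivity)]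
  refine h.trans ?_
  rw [hsp]
  obtain ⟨l, rfl⟩ := Nat.exists_eq_add_of_le hn
  set y := s ^ (k + 1) with hy
  have hy1 : 1 ≤ y := one_le_pow₀ hp1
  have hy0 : 0 < y := by linarith
  have e3 : √C * (s ^ 3)⁻¹ * (s ^ 3)⁻¹ ^ k * ((s ^ 2) ^ (k + 1)) ^ (4 + l + 1) =
     √C * (y ^ 3)⁻¹ * (y ^ 2) ^ (4 + l + 1) := by
    rw [hy, show (s ^ (k + 1)) ^ 3 = s ^ 3 * (s ^ 3) ^ k by ring]
    rw [mul_inv, inv_pow]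
    ring
  rw [e3, show (s ^ 2) ^ (k + 1) = y ^ 2 by rw [hy]; ring]
  have e4 : √C * (y ^ 3)⁻¹ * (y ^ 2) ^ (4 + l + 1) = √C * (y ^ (7 + l)) * y ^ l := by
    field_simp
    ring
  rw [e4]
  have : y ^ 2 * (y ^ (4 + l + 1) * √C) = √C * y ^ (7 + l) * 1 := by ring
  rw [this]
  gcongr
  exact one_le_pow₀ hy1

lemma cnt_zero {m : ℕ} (A : Matrix (Fin m) (Fin m) ℤ) (p : ℕ) : cnt A p 0 = 1 := by
  unfold cnt
  have : Subsingleton (ZMod (p ^ 0)) := by rw [pow_zero]; infer_instance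
  rw [Nat.card_eq_one_iff_unique]
  exact ⟨inferInstance, ⟨⟨0, Subsingleton.elim _ _⟩⟩⟩

lemma r_lt {p : ℕ} (hp : p.Prime) : ((√(p : ℝ)) ^ 3)⁻¹ ≤ 1 / 2 := by
  have h2 : (2 : ℝ) ≤ p := by exact_mod_cast hp.two_le
  have h3 : (√(p : ℝ)) ^ 2 = p := Real.sq_sqrt (by positivity)
  have h1 : (1 : ℝ) ≤ √p := by rw [Real.one_le_sqrt]; linarith
  rw [one_div]
  apply inv_anti₀ (by norm_num)
  calc (2 : ℝ) ≤ p * 1 := by linarith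
    _ ≤ p * √p := by gcongr
    _ = _ := by rw [pow_succ, h3]

lemma exists_sigma {n : ℕ} (hn : 4 ≤ n) (A : Matrix (Fin (n + 1)) (Fin (n + 1)) ℤ)
    (hD : (A + Aᵀ).det ≠ 0) {p : ℕ} (hp : p.Prime) :
    ∃ σ : ℝ, Tendsto (fun k : ℕ => (cnt A p k : ℝ) / (p : ℝ) ^ (n * k)) atTop (𝓝 σ) ∧
      (¬ (p : ℤ) ∣ (A + Aᵀ).det → |σ - 1| ≤ 2 * ((√(p : ℝ)) ^ 3)⁻¹) := by
  classical
  have hr := r_lt hp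
  have hr0 : 0 ≤ ((√(p : ℝ)) ^ 3)⁻¹ := by positivity
  have key : ∀ k, NeZero (p ^ (k + 1)) := fun k => ⟨pow_ne_zero _ hp.ne_zero⟩
  have hc : CauchySeq (fun k : ℕ => (cnt A p k : ℝ) / (p : ℝ) ^ (n * k)) := by
    refine cauchySeq_of_le_geometric (((√(p : ℝ)) ^ 3)⁻¹)
      (√(((A + Aᵀ).det.natAbs ^ (n + 1) : ℕ) : ℝ) * ((√(p : ℝ)) ^ 3)⁻¹) (by linarith) fun k => ?_
    have := key k
    exact cnt_step hn A hp k _ (cnt_rec A hp k _ (by exact_mod_cast ker_card_le _ hD))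
  obtain ⟨σ, hσ⟩ := cauchySeq_tendsto_of_complete hc
  refine ⟨σ, hσ, fun hpD => ?_⟩
  have := dist_le_of_le_geometric_of_tendsto₀ (((√(p : ℝ)) ^ 3)⁻¹)
      (√((1 : ℝ)) * ((√(p : ℝ)) ^ 3)⁻¹) (by linarith) (fun k => by
        have := key k
        refine cnt_step hn A hp k _ (cnt_rec A hp k _ ?_)
        have hu : IsUnit ((A + Aᵀ).det : ZMod (p ^ (k + 1))) := by
          rw [ZMod.coe_int_isUnit_iff_isCoprime]
          push_cast
          apply IsCoprime.pow_left
          exact (Prime.coprime_iff_not_dvd (Nat.prime_iff_prime_int.1 hp)).2 hpD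
        exact_mod_cast ker_card_le_one _ hu) hσ
  simp only [cnt_zero, mul_zero, pow_zero, Nat.cast_one, div_one, Real.sqrt_one, one_mul] at this
  rw [abs_sub_comm]
  refine (Real.dist_eq 1 σ ▸ this).trans ?_
  rw [div_le_iff₀ (by linarith)]
  nlinarith

lemma qf_update {m : ℕ} {R : Type*} [CommRing R] (A : Matrix (Fin m) (Fin m) R) (v : Fin m → R)
    (i : Fin m) (h : R) : qf A (v + Pi.single i h) =
      qf A v + h * (((A + Aᵀ) *ᵥ v) i + h * A i i) := by
  rw [add_comm v, qf_add, dotProduct_comm, add_comm (qf A _) (qf A v)]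
  unfold qf
  simp only [single_dotProduct, mulVec_single, Pi.smul_apply, col_apply]
  simp
  ring

lemma hensel_card {n : ℕ} {R S : Type*} [CommRing R] [CommRing S] [Finite R] [Finite S]
    (π : R →+* S)
    (hπ : Function.Surjective π) (hloc : ∀ x, IsUnit (π x) → IsUnit x)
    (A : Matrix (Fin (n + 1)) (Fin (n + 1)) R) (lam : Fin (n + 1) → R) (hlam : π (qf A lam) = 0)
    (i : Fin (n + 1)) (hi : IsUnit (((A + Aᵀ) *ᵥ lam) i)) :
    Nat.card {v : Fin (n + 1) → R // qf A v = 0 ∧ ∀ j, π (v j) = π (lam j)} * Nat.card S ^ n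
      = Nat.card R ^ n := by
  classical
  let X := {v : Fin (n + 1) → R // ∀ j, π (v j) = π (lam j)}
  have hq : ∀ v : X, π (qf A v.1) = 0 := by
    intro v
    rw [← hlam, qf_map, qf_map]
    congr 1
    exact funext v.2
  let Φ : X → X := fun v => ⟨Function.update v.1 i (lam i + qf A v.1), by
    intro j
    by_cases hj : j = i
    · subst hj; simp [hq v]
    · simp [hj, v.2 j]⟩
  have hinj : Function.Injective Φ := by
    intro v w hvw
    have h0 : ∀ j, Function.update v.1 i (lam i + qf A v.1) j =
        Function.update w.1 i (lam i + qf A w.1) j := fun j => congrFun (congrArg Subtype.val hvw) j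
    have h1 : qf A v.1 = qf A w.1 := by simpa using h0 i
    have h2 : ∀ j, j ≠ i → v.1 j = w.1 j := fun j hj => by simpa [hj] using h0 j
    have h3 : w.1 = v.1 + Pi.single i (w.1 i - v.1 i) := by
      ext j
      by_cases hj : j = i
      · subst hj; simp
      · simp [hj, h2 j hj]
    have h4 := qf_update A v.1 i (w.1 i - v.1 i)
    rw [← h3, ← h1] at h4
    have h5 : IsUnit (((A + Aᵀ) *ᵥ v.1) i + (w.1 i - v.1 i) * A i i) := by
      apply hloc
      have : π (((A + Aᵀ) *ᵥ v.1) i + (w.1 i - v.1 i) * A i i) = π (((A + Aᵀ) *ᵥ lam) i) := by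
        rw [map_add, map_mul, map_sub, w.2 i, v.2 i, sub_self, zero_mul, add_zero]
        simp only [mulVec, dotProduct, map_sum, map_mul, v.2]
      rw [this]
      exact hi.map π
    have h6 : w.1 i - v.1 i = 0 := by
      rw [← h5.mul_left_eq_zero]
      linear_combination -h4
    apply Subtype.ext
    rw [h3, h6]; simp
  have hbij : Function.Bijective Φ := Finite.injective_iff_bijective.1 hinj
  have e1 : {v : Fin (n + 1) → R // qf A v = 0 ∧ ∀ j, π (v j) = π (lam j)} ≃
      {v : X // qf A v.1 = 0} :=
    { toFun := fun v => ⟨⟨v.1, v.2.2⟩, v.2.1⟩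
      invFun := fun v => ⟨v.1.1, v.2, v.1.2⟩
      left_inv := fun _ => rfl
      right_inv := fun _ => rfl }
  have e2 : {v : X // qf A v.1 = 0} ≃ {w : X // w.1 i = lam i} :=
    (Equiv.ofBijective Φ hbij).subtypeEquiv (fun v => by simp [Φ])
  have e3 : {w : X // w.1 i = lam i} ≃
      {w : Fin (n + 1) → R // ∀ j, (π (w j) = π (lam j) ∧ (j = i → w j = lam j))} :=
    { toFun := fun w => ⟨w.1.1, fun j => ⟨w.1.2 j, fun h => by rw [h]; exact w.2⟩⟩
      invFun := fun w => ⟨⟨w.1, fun j => (w.2 j).1⟩, (w.2 i).2 rfl⟩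
      left_inv := fun _ => rfl
      right_inv := fun _ => rfl }
  rw [Nat.card_congr (e1.trans (e2.trans (e3.trans (Equiv.subtypePiEquivPi
    (p := fun j b => π b = π (lam j) ∧ (j = i → b = lam j)))))), Nat.card_pi]
  rw [Fintype.prod_eq_mul_prod_compl i]
  have h1 : Nat.card {b // π b = π (lam i) ∧ (i = i → b = lam i)} = 1 := by
    rw [Nat.card_eq_one_iff_unique]
    exact ⟨⟨fun a b => Subtype.ext ((a.2.2 rfl).trans (b.2.2 rfl).symm)⟩, ⟨⟨lam i, rfl, fun _ => rfl⟩⟩⟩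
  have h2 : #({i}ᶜ : Finset (Fin (n + 1))) = n := by
    rw [Finset.card_compl]; simp
  rw [h1, one_mul]
  have h3 : ∀ x : ℕ, x ^ n = ∏ _j ∈ ({i}ᶜ : Finset (Fin (n + 1))), x := fun x => by
    rw [Finset.prod_const, h2]
  rw [h3, h3, ← Finset.prod_mul_distrib]
  refine Finset.prod_congr rfl fun j hj => ?_
  have hj' : j ≠ i := by simpa using hj
  rw [← card_fiber π.toAddMonoidHom hπ (π (lam j))]
  congr 1
  refine Nat.card_congr (Equiv.subtypeEquivRight fun b => ?_)
  simp [hj']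

lemma Fint_eq {m : ℕ} (A : Matrix (Fin m) (Fin m) ℤ) (x : Fin m → ℤ) :
    Fint (A + Aᵀ) x = qf A x := by
  unfold Fint
  have : (∑ i, ∑ j, (A + Aᵀ) i j * x i * x j) = 2 * qf A x := by
    unfold qf
    simp only [Matrix.add_apply, transpose_apply, add_mul, Finset.sum_add_distrib]
    rw [Finset.sum_comm (f := fun i j => A j i * x i * x j), two_mul]
    simp only [dotProduct, mulVec, Finset.mul_sum]
    congr 1 <;>
    · refine Finset.sum_congr rfl fun i _ => Finset.sum_congr rfl fun j _ => ?_
      ring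
  rw [this]; simp

lemma localCount_eq {n : ℕ} (A : Matrix (Fin (n + 1)) (Fin (n + 1)) ℤ) (L : ℕ)
    (lam : Fin (n + 1) → ℤ) {p k : ℕ} (hp : p.Prime) (hk : padicValNat p L ≤ k) :
    localCount n (A + Aᵀ) L lam p k =
      Nat.card {v : Fin (n + 1) → ZMod (p ^ k) //
        qf (A.map (Int.cast : ℤ → ZMod (p ^ k))) v = 0 ∧
        ∀ j, ZMod.castHom (pow_dvd_pow p hk) (ZMod (p ^ padicValNat p L)) (v j) =
          ZMod.castHom (pow_dvd_pow p hk) (ZMod (p ^ padicValNat p L)) ((lam j : ℤ) : ZMod (p ^ k))} := by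
  have : NeZero (p ^ k) := ⟨pow_ne_zero _ hp.ne_zero⟩
  unfold localCount
  have hb : Function.Bijective (fun x : Fin (p ^ k) => ((x : ℕ) : ZMod (p ^ k))) := by
    constructor
    · intro x y hxy
      have := congrArg ZMod.val hxy
      simp only [ZMod.val_natCast_of_lt x.2, ZMod.val_natCast_of_lt y.2] at this
      exact Fin.ext this
    · intro x
      exact ⟨⟨x.val, ZMod.val_lt x⟩, ZMod.natCast_zmod_val x⟩
  refine Nat.card_congr ((Equiv.arrowCongr (Equiv.refl (Fin (n + 1)))
    (Equiv.ofBijective _ hb)).subtypeEquiv fun v => ?_)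
  have h1 : ∀ j, (Equiv.arrowCongr (Equiv.refl (Fin (n + 1))) (Equiv.ofBijective _ hb)) v j =
      (((v j : ℕ) : ℤ) : ZMod (p ^ k)) := by
    intro j; simp
  rw [Fint_eq]
  refine and_congr ?_ (forall_congr' fun j => ?_)
  · rw [funext h1]
    have := qf_map (Int.castRingHom (ZMod (p ^ k))) A (fun i => ((v i : ℕ) : ℤ))
    simp only [Int.coe_castRingHom] at this
    rw [← this, ZMod.intCast_zmod_eq_zero_iff_dvd]
    push_cast; rfl
  · rw [h1 j, map_intCast, map_intCast, eq_comm, ZMod.intCast_eq_intCast_iff_dvd_sub]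
    push_cast; rfl

lemma localCount_triv {n : ℕ} (A : Matrix (Fin (n + 1)) (Fin (n + 1)) ℤ) (L : ℕ)
    (lam : Fin (n + 1) → ℤ) {p : ℕ} (k : ℕ) (hp : p.Prime) (h : padicValNat p L = 0) :
    localCount n (A + Aᵀ) L lam p k = cnt A p k := by
  rw [localCount_eq A L lam hp (by omega)]
  unfold cnt
  refine Nat.card_congr (Equiv.subtypeEquivRight fun v => ?_)
  have : Subsingleton (ZMod (p ^ padicValNat p L)) := by rw [h, pow_zero]; infer_instance
  exact and_iff_left fun j => Subsingleton.elim _ _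

lemma localCount_hensel {n : ℕ} (A : Matrix (Fin (n + 1)) (Fin (n + 1)) ℤ) (L : ℕ)
    (lam : Fin (n + 1) → ℤ) {p k : ℕ} (hp : p.Prime) (hk : padicValNat p L ≤ k)
    (h1 : 1 ≤ padicValNat p L) (hD : ¬ (p : ℤ) ∣ (A + Aᵀ).det)
    (hlam : (p : ℤ) ^ padicValNat p L ∣ Fint (A + Aᵀ) lam) (j : Fin (n + 1))
    (hj : ¬ (p : ℤ) ∣ lam j) :
    (localCount n (A + Aᵀ) L lam p k : ℝ) / (p : ℝ) ^ (n * k) =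
      ((p : ℝ) ^ (n * padicValNat p L))⁻¹ := by
  have : NeZero (p ^ k) := ⟨pow_ne_zero _ hp.ne_zero⟩
  have : NeZero (p ^ padicValNat p L) := ⟨pow_ne_zero _ hp.ne_zero⟩
  have hpi : Prime (p : ℤ) := Nat.prime_iff_prime_int.1 hp
  obtain ⟨i, hi⟩ : ∃ i, ¬ (p : ℤ) ∣ ((A + Aᵀ) *ᵥ lam) i := by
    by_contra! hcon
    have h2 : (A + Aᵀ).adjugate *ᵥ ((A + Aᵀ) *ᵥ lam) = (A + Aᵀ).det • lam := by
      rw [mulVec_mulVec, adjugate_mul, smul_mulVec, one_mulVec]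
    have h3 : (p : ℤ) ∣ (A + Aᵀ).det * lam j := by
      have := congrFun h2 j
      simp only [Pi.smul_apply, smul_eq_mul] at this
      rw [← this]
      simp only [mulVec.eq_1 (A + Aᵀ).adjugate, dotProduct]
      exact Finset.dvd_sum fun l _ => (hcon l).mul_left _
    rcases hpi.dvd_or_dvd h3 with h | h
    · exact hD h
    · exact hj h
  rw [localCount_eq A L lam hp hk]
  have key := hensel_card (ZMod.castHom (pow_dvd_pow p hk) (ZMod (p ^ padicValNat p L)))
    (ZMod.ringHom_surjective _) (fun x => (isUnit_iff_cast hp h1 hk x).1)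
    (A.map (Int.cast : ℤ → ZMod (p ^ k))) (fun j => ((lam j : ℤ) : ZMod (p ^ k))) (by
      have := qf_map (Int.castRingHom (ZMod (p ^ k))) A lam
      simp only [Int.coe_castRingHom] at this
      rw [← this, map_intCast, ZMod.intCast_zmod_eq_zero_iff_dvd, ← Fint_eq]
      push_cast; exact hlam) i (by
      have h5 : ((A.map (Int.cast : ℤ → ZMod (p ^ k)) + (A.map (Int.cast : ℤ → ZMod (p ^ k)))ᵀ) *ᵥ
          (fun j => ((lam j : ℤ) : ZMod (p ^ k)))) i = ((((A + Aᵀ) *ᵥ lam) i : ℤ) : ZMod (p ^ k)) := by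
        simp [mulVec, dotProduct]
      rw [h5, ZMod.coe_int_isUnit_iff_isCoprime]
      push_cast
      apply IsCoprime.pow_left
      exact (Prime.coprime_iff_not_dvd hpi).2 hi)
  rw [Nat.card_zmod, Nat.card_zmod] at key
  have hp0 : (p : ℝ) ≠ 0 := by exact_mod_cast hp.ne_zero
  have key' := congrArg (Nat.cast : ℕ → ℝ) key
  push_cast at key'
  rw [div_eq_iff (by positivity), ← div_eq_inv_mul, eq_div_iff (by positivity), mul_comm n, mul_comm n,
    pow_mul, pow_mul]
  exact key'

/-- The Dirichlet coefficients `μ(d) / d ^ k` restricted to `d` coprime to `L`. -/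
def fcoef (L k : ℕ) (d : ℕ) : ℝ :=
  if Nat.Coprime d L then ((ArithmeticFunction.moebius d : ℤ) : ℝ) / (d : ℝ) ^ k else 0

lemma fcoef_summable (L : ℕ) {k : ℕ} (hk : 2 ≤ k) : Summable fun d => ‖fcoef L k d‖ := by
  refine Summable.of_nonneg_of_le (fun _ => norm_nonneg _) (fun d => ?_)
    (Real.summable_one_div_nat_pow.2 (by omega : 1 < k))
  unfold fcoef
  split_ifs
  · rw [norm_div, norm_pow, Real.norm_natCast]
    gcongr
    rw [Real.norm_eq_abs]
    exact_mod_cast ArithmeticFunction.abs_moebius_le_one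
  · simp

lemma fcoef_euler (L : ℕ) {k : ℕ} (hk : 2 ≤ k) :
    HasProd (fun p : {q : {r : ℕ // r.Prime} // ¬ (q.1 ∣ L)} => (1 - ((p.1.1 : ℝ) ^ k)⁻¹))
      (∑' d, fcoef L k d) := by
  have h := EulerProduct.eulerProduct_hasProd (f := fcoef L k) (by simp [fcoef]) (by
    intro a b hab
    unfold fcoef
    have hc : Nat.Coprime (a * b) L ↔ a.Coprime L ∧ b.Coprime L := Nat.coprime_mul_iff_left
    by_cases h1 : Nat.Coprime a L
    · by_cases h2 : Nat.Coprime b L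
      · rw [if_pos h1, if_pos h2, if_pos (hc.2 ⟨h1, h2⟩)]
        rw [ArithmeticFunction.isMultiplicative_moebius.map_mul_of_coprime hab]
        push_cast
        rw [mul_pow, mul_div_mul_comm]
      · simp [hc, h2]
    · simp [hc, h1]) (fcoef_summable L hk) (by simp [fcoef])
  have h1 : ∀ p : {r : ℕ // r.Prime}, ∑' e, fcoef L k (p.1 ^ e) =
      if p.1 ∣ L then 1 else 1 - ((p.1 : ℝ) ^ k)⁻¹ := by
    intro p
    rw [tsum_eq_sum (s := Finset.range 2)]
    · rw [Finset.sum_range_succ, Finset.sum_range_one]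
      unfold fcoef
      rw [pow_one, pow_zero]
      have hc := p.2.coprime_iff_not_dvd (n := L)
      by_cases hL : p.1 ∣ L
      · simp [hc, hL]
      · simp [hc, hL, ArithmeticFunction.moebius_apply_prime p.2, neg_div, sub_eq_add_neg]
    · intro e he
      have he' : 2 ≤ e := by simpa [Nat.succ_le_iff] using he
      unfold fcoef
      have : ArithmeticFunction.moebius (p.1 ^ e) = 0 := by
        rw [ArithmeticFunction.moebius_apply_prime_pow p.2 (by omega), if_neg (by omega)]
      rw [this]; simp
  have h2 : HasProd (fun p : {r : ℕ // r.Prime} => if p.1 ∣ L then 1 else 1 - ((p.1 : ℝ) ^ k)⁻¹)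
      (∑' d, fcoef L k d) := by
    rw [← funext h1]; exact h
  rw [← hasProd_subtype_iff_of_mulSupport_subset (s := {q : {r : ℕ // r.Prime} | ¬ q.1 ∣ L})] at h2
  · refine (congrArg (fun f => HasProd f (∑' d, fcoef L k d)) (funext fun p => ?_)).mp h2
    exact if_neg p.2
  · intro p hp hcon
    apply hp
    simp only [hcon, if_true]

lemma sigma_summable (D : ℤ) (hD : D ≠ 0) (σ : ℕ → ℝ)
    (h : ∀ p : ℕ, p.Prime → ¬ (p : ℤ) ∣ D → |σ p - 1| ≤ 2 * ((√(p : ℝ)) ^ 3)⁻¹) :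
    Summable fun p : {r : ℕ // r.Prime} => ‖σ p.1 - 1‖ := by
  have hs : Summable fun p : {r : ℕ // r.Prime} => 2 * ((√(p.1 : ℝ)) ^ 3)⁻¹ := by
    apply Summable.mul_left
    have := (Nat.Primes.summable_rpow (r := -(3 / 2))).2 (by norm_num)
    refine this.congr fun p => ?_
    rw [Real.sqrt_eq_rpow, ← Real.rpow_natCast, ← Real.rpow_mul (by positivity),
      ← Real.rpow_neg (by positivity)]
    norm_num
  refine Summable.of_norm_bounded_eventually hs ?_
  rw [Filter.eventually_cofinite]
  refine Set.Finite.subset (s := (fun p : {r : ℕ // r.Prime} => p.1) ⁻¹' (D.natAbs.divisors : Set ℕ)) ?_ ?_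
  · exact Set.Finite.preimage Subtype.val_injective.injOn (Finset.finite_toSet _)
  · intro p hp
    replace hp : ¬ ‖‖σ p.1 - 1‖‖ ≤ 2 * ((√(p.1 : ℝ)) ^ 3)⁻¹ := hp
    rw [norm_norm, Real.norm_eq_abs] at hp
    have : (p.1 : ℤ) ∣ D := by
      by_contra hcon
      exact hp (h p.1 p.2 hcon)
    simp only [Set.mem_preimage, Finset.mem_coe, Nat.mem_divisors]
    exact ⟨Int.natCast_dvd.1 this, Int.natAbs_ne_zero.2 hD⟩

lemma full_prod (L : ℕ) (hL : 0 < L) (σ : ℕ → ℝ) (g : ℕ → ℝ)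
    (hs : Summable fun p : {r : ℕ // r.Prime} => ‖σ p.1 - 1‖) :
    ∃ P : ℝ, HasProd (fun p : {q : {r : ℕ // r.Prime} // ¬ (q.1 ∣ L)} => σ p.1.1) P ∧
      HasProd (fun p : {r : ℕ // r.Prime} => if p.1 ∣ L then g p.1 else σ p.1)
        ((∏ p ∈ L.primeFactors, g p) * P) := by
  have hm : Multipliable (fun p : {q : {r : ℕ // r.Prime} // ¬ (q.1 ∣ L)} => 1 + (σ p.1.1 - 1)) :=
    multipliable_one_add_of_summable (hs.comp_injective Subtype.val_injective)
  simp only [add_sub_cancel] at hm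
  obtain ⟨P, hP⟩ := hm
  refine ⟨P, hP, ?_⟩
  have h1 : HasProd (fun p : {r : ℕ // r.Prime} => if p.1 ∣ L then g p.1 else 1)
      (∏ p ∈ L.primeFactors, g p) := by
    have := hasProd_prod_of_ne_finset_one (L := SummationFilter.unconditional _) (s := L.primeFactors.subtype Nat.Prime)
      (f := fun p : {r : ℕ // r.Prime} => if p.1 ∣ L then g p.1 else 1) (by
        intro p hp
        rw [Finset.mem_subtype, Nat.mem_primeFactors] at hp
        rw [if_neg]
        exact fun h => hp ⟨p.2, h, hL.ne'⟩)
    rw [Finset.prod_subtype_of_mem (fun q => if q ∣ L then g q else 1)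
      (fun x hx => Nat.prime_of_mem_primeFactors hx)] at this
    rw [← Finset.prod_congr rfl (fun q hq => if_pos (Nat.dvd_of_mem_primeFactors hq))]
    exact this
  have h2 : HasProd (fun p : {r : ℕ // r.Prime} => if p.1 ∣ L then 1 else σ p.1) P := by
    rw [← hasProd_subtype_iff_of_mulSupport_subset (s := {q : {r : ℕ // r.Prime} | ¬ q.1 ∣ L})]
    · refine (congrArg (fun f => HasProd f P) (funext fun p => ?_)).mp hP
      exact (if_neg p.2).symm
    · intro p hp hcon
      apply hp
      simp only [hcon, if_true]
  convert h1.mul h2 using 2 with p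
  split_ifs <;> simp

lemma totient_prod (n L : ℕ) (hn : 4 ≤ n) (hL : 0 < L) :
    (Nat.totient L : ℝ) * ∏ p ∈ L.primeFactors, ((p : ℝ) ^ (n * padicValNat p L))⁻¹ =
      ∏ p ∈ L.primeFactors, (1 - ((p : ℝ))⁻¹) * (((p : ℝ)) ^ ((n-1) * padicValNat p L))⁻¹ := by
  have h1 : (Nat.totient L : ℝ) = (L : ℝ) * ∏ p ∈ L.primeFactors, (1 - ((p : ℝ))⁻¹) := by
    have := congrArg (Rat.cast : ℚ → ℝ) (Nat.totient_eq_mul_prod_factors L)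
    push_cast at this
    exact this
  have h2 : (L : ℝ) = ∏ p ∈ L.primeFactors, (p : ℝ) ^ padicValNat p L := by
    conv_lhs => rw [← Nat.prod_factorization_pow_eq_self hL.ne']
    rw [Finsupp.prod, Nat.support_factorization]
    push_cast
    refine Finset.prod_congr rfl fun p hp => ?_
    rw [Nat.factorization_def _ (Nat.prime_of_mem_primeFactors hp)]
  rw [h1]
  conv_lhs => rw [h2]
  rw [← Finset.prod_mul_distrib, ← Finset.prod_mul_distrib]
  refine Finset.prod_congr rfl fun p hp => ?_
  have hp0 : (p : ℝ) ≠ 0 := by exact_mod_cast (Nat.prime_of_mem_primeFactors hp).ne_zero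
  obtain ⟨l, rfl⟩ : ∃ l, n = l + 1 := ⟨n - 1, by omega⟩
  rw [Nat.add_sub_cancel, add_mul, one_mul, pow_add, mul_inv]
  field_simp

lemma local_tendsto (n : ℕ) (A : Matrix (Fin (n+1)) (Fin (n+1)) ℤ)
    (L : ℕ) (hL : 0 < L) (hLcop : Int.gcd (L : ℤ) (2 * (A + Aᵀ).det) = 1)
    (Γ : Fin (n+1) → ℤ) (hΓ : (L : ℤ) ∣ Fint (A + Aᵀ) Γ)
    (hΓgcd : Int.gcd (Finset.univ.gcd Γ) (L : ℤ) = 1) (σW : ℕ → ℝ)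
    (hσ : ∀ p : ℕ, p.Prime →
      Tendsto (fun k : ℕ => (cnt A p k : ℝ) / (p : ℝ) ^ (n * k)) atTop (𝓝 (σW p)))
    (c : ℤ) (hc : IsCoprime c (L : ℤ)) (p : ℕ) (hp : p.Prime) :
    Tendsto (fun k : ℕ => (localCount n (A + Aᵀ) L (fun i => c * Γ i) p k : ℝ) / (p : ℝ)^(n*k))
      atTop (𝓝 (if p ∣ L then ((p : ℝ) ^ (n * padicValNat p L))⁻¹ else σW p)) := by
  have hpi : Prime (p : ℤ) := Nat.prime_iff_prime_int.1 hp
  split_ifs with hpL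
  · have hpL' : (p : ℤ) ∣ L := by exact_mod_cast hpL
    have hm : 1 ≤ padicValNat p L := by
      have := Fact.mk hp
      exact one_le_padicValNat_of_dvd hL.ne' hpL
    have hD : ¬ (p : ℤ) ∣ (A + Aᵀ).det := by
      intro h
      have := Int.dvd_coe_gcd hpL' (h.mul_left 2)
      rw [hLcop] at this
      exact hpi.not_dvd_one (by exact_mod_cast this)
    have hcp : ¬ (p : ℤ) ∣ c := fun h => hpi.not_isUnit (hc.isUnit_of_dvd' h hpL')
    obtain ⟨j, hj⟩ : ∃ j, ¬ (p : ℤ) ∣ Γ j := by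
      by_contra! hcon
      have h1 : (p : ℤ) ∣ Finset.univ.gcd Γ := Finset.dvd_gcd fun j _ => hcon j
      have := Int.dvd_coe_gcd h1 hpL'
      rw [hΓgcd] at this
      exact hpi.not_dvd_one (by exact_mod_cast this)
    have hF : (p : ℤ) ^ padicValNat p L ∣ Fint (A + Aᵀ) (fun i => c * Γ i) := by
      have h1 : Fint (A + Aᵀ) (fun i => c * Γ i) = c ^ 2 * Fint (A + Aᵀ) Γ := by
        rw [Fint_eq, Fint_eq]
        have : (fun i => c * Γ i) = c • Γ := rfl
        unfold qf
        rw [this, mulVec_smul, smul_dotProduct, dotProduct_smul, smul_eq_mul, smul_eq_mul]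
        ring
      rw [h1]
      refine Dvd.dvd.mul_left (dvd_trans ?_ hΓ) _
      exact_mod_cast pow_padicValNat_dvd
    refine tendsto_const_nhds.congr' ?_
    filter_upwards [eventually_ge_atTop (padicValNat p L)] with k hk
    refine (localCount_hensel A L _ hp hk hm hD hF j ?_).symm
    intro h
    rcases hpi.dvd_or_dvd h with h | h
    · exact hcp h
    · exact hj h
  · have hm : padicValNat p L = 0 := padicValNat.eq_zero_of_not_dvd hpL
    simp_rw [localCount_triv A L _ _ hp hm]
    exact hσ p hp

/-- The arithmetic factor identity: the Möbius-inverted sum of singular series equals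
an Euler product of local densities. -/
theorem moebius_singular_series_identity (n : ℕ) (hn : 4 ≤ n)
    (N : Matrix (Fin (n+1)) (Fin (n+1)) ℤ) (hNsym : N.IsSymm)
    (hNeven : ∀ i, Even (N i i)) (hNdet : N.det ≠ 0)
    (L : ℕ) (hL : 0 < L) (hLcop : Int.gcd (L : ℤ) (2 * N.det) = 1)
    (Γ : Fin (n+1) → ℤ) (hΓ : (L : ℤ) ∣ Fint N Γ)
    (hΓgcd : Int.gcd (Finset.univ.gcd Γ) (L : ℤ) = 1) :
    ∃ Sser : (ZMod L)ˣ → ℕ → ℝ,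
      (∀ (γ : (ZMod L)ˣ) (d : ℕ), 0 < d → Nat.Coprime d L →
        ∃ σp : ℕ → ℝ,
          (∀ p : ℕ, p.Prime →
            Filter.Tendsto
              (fun k : ℕ =>
                (localCount n N L
                  (fun i => ((((γ : ZMod L) * ((d : ZMod L))⁻¹).val : ℤ) * Γ i)) p k : ℝ)
                  / (p : ℝ)^(n*k))
              Filter.atTop (nhds (σp p))) ∧
          HasProd (fun p : {p : ℕ // p.Prime} => σp p.1) (Sser γ d)) ∧
      Summable (fun gd : (ZMod L)ˣ × ℕ =>
        |if Nat.Coprime gd.2 L then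
            ((ArithmeticFunction.moebius gd.2 : ℤ) : ℝ) / (gd.2 : ℝ)^(n-1)
              * Sser gd.1 gd.2
          else 0|) ∧
      ∃ σW : ℕ → ℝ,
        (∀ p : ℕ, p.Prime →
          Filter.Tendsto
            (fun k : ℕ => (localCount n N 1 0 p k : ℝ) / (p : ℝ)^(n*k))
            Filter.atTop (nhds (σW p))) ∧
        ∃ P : ℝ,
          HasProd
            (fun p : {q : {r : ℕ // r.Prime} // ¬ (q.1 ∣ L)} =>
              (1 - ((p.1.1 : ℝ) ^ (n-1))⁻¹) * σW p.1.1) P ∧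
          (∑' γ : (ZMod L)ˣ, ∑' d : ℕ,
              (if Nat.Coprime d L then
                ((ArithmeticFunction.moebius d : ℤ) : ℝ) / (d : ℝ)^(n-1) * Sser γ d
              else 0))
            = (∏ p ∈ L.primeFactors,
                (1 - ((p : ℝ))⁻¹) * (((p : ℝ)) ^ ((n-1) * padicValNat p L))⁻¹) * P := by
  have : NeZero L := ⟨hL.ne'⟩
  obtain ⟨A, rfl⟩ := exists_half N hNsym hNeven
  have hex : ∀ p : ℕ, ∃ σ : ℝ, p.Prime →
      (Tendsto (fun k : ℕ => (cnt A p k : ℝ) / (p : ℝ) ^ (n * k)) atTop (𝓝 σ) ∧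
      (¬ (p : ℤ) ∣ (A + Aᵀ).det → |σ - 1| ≤ 2 * ((√(p : ℝ)) ^ 3)⁻¹)) := by
    intro p
    by_cases hp : p.Prime
    · obtain ⟨σ, h⟩ := exists_sigma hn A hNdet hp
      exact ⟨σ, fun _ => h⟩
    · exact ⟨0, fun h => absurd h hp⟩
  choose σW hσ using hex
  obtain ⟨P, hP, hfull⟩ := full_prod L hL σW (fun p => ((p : ℝ) ^ (n * padicValNat p L))⁻¹)
    (sigma_summable _ hNdet σW fun p hp => (hσ p hp).2)
  have hk : 2 ≤ n - 1 := by omega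
  have hf : ∀ (S : ℝ) (d : ℕ), (if Nat.Coprime d L then
      ((ArithmeticFunction.moebius d : ℤ) : ℝ) / (d : ℝ)^(n-1) * S else 0) = fcoef L (n - 1) d * S := by
    intro S d
    unfold fcoef
    split_ifs <;> simp
  refine ⟨fun _ _ => (∏ p ∈ L.primeFactors, ((p : ℝ) ^ (n * padicValNat p L))⁻¹) * P,
    fun γ d _ hd => ⟨fun p => if p ∣ L then ((p : ℝ) ^ (n * padicValNat p L))⁻¹ else σW p,
      fun p hp => ?_, hfull⟩, ?_, σW, fun p hp => ?_, (∑' d, fcoef L (n - 1) d) * P,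
      (fcoef_euler L hk).mul hP, ?_⟩
  · refine local_tendsto n A L hL hLcop Γ hΓ hΓgcd σW (fun p hp => (hσ p hp).1) _ ?_ p hp
    rw [Nat.isCoprime_iff_coprime]
    have hu : ((γ * (ZMod.unitOfCoprime d hd)⁻¹ : (ZMod L)ˣ) : ZMod L) = (γ : ZMod L) * ((d : ZMod L))⁻¹ := by
      rw [Units.val_mul, ← ZMod.inv_coe_unit, ZMod.coe_unitOfCoprime]
    rw [← hu]
    exact ZMod.val_coe_unit_coprime _
  · simp_rw [hf]
    rw [summable_prod_of_nonneg (fun _ => abs_nonneg _)]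
    refine ⟨fun γ => ?_, Summable.of_finite⟩
    simp_rw [abs_mul]
    exact (fcoef_summable L hk).mul_right _
  · simp_rw [localCount_triv A 1 0 _ hp (padicValNat_one_right p)]
    exact (hσ p hp).1
  · simp_rw [hf]
    rw [tsum_mul_right, tsum_const, Nat.card_eq_fintype_card, ZMod.card_units_eq_totient,
      nsmul_eq_mul, ← totient_prod n L hn hL]
    ring

end Quad
end
end

section
/- (Evaluation of complete quadratic Gauss–Kloosterman sums.) Let G(x) = xᵀM_G x be a quadratic form in n+1 variables, where M_G is symmetric, 2M_G has integer entries and det M_G ≠ 0; set D_G := det(2M_G) ∈ ℤ. For m ∈ ℤ, c ∈ ℤ^{n+1} and q ∈ ℕ define T_q(G,m;c) := Σ_{a mod q, gcd(a,q)=1} Σ_{b ∈ (ℤ/qℤ)^{n+1}} e_q( a·(G(b) − m) + c·b ), and let ι_q := Σ_{x mod q} e_q(x²) be the quadratic Gauss sum. Assume gcd(q, 2D_G) = 1. Then T_q(G,m;c) = ( ι_q·(2|q) )^{n+1} · (D_G|q) · Σ_{a mod q, gcd(a,q)=1} (a|q)^{n+1} · e_q( −a·m − w_a·N_G(c) ),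 where (·|q) denotes the Jacobi symbol, N_G(c) := cᵀ·adj(2M_G)·c ∈ ℤ (adj = adjugate), and w_a denotes the multiplicative inverse of 2·a·D_G modulo q. -/
open scoped BigOperators
open Finset Filter Topology Matrix

noncomputable section

namespace Quad

/-- Integer-valued quadratic form `xᵀ M x`. -/
def Qf {n : ℕ} (M : Matrix (Fin n) (Fin n) ℤ) (x : Fin n → ℤ) : ℤ := x ⬝ᵥ M *ᵥ x

/-- The additive character on integers. -/
def E (q : ℕ) [NeZero q] (t : ℤ) : ℂ := ZMod.stdAddChar (t : ZMod q)

/-- The Gauss sum of a quadratic form. -/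
def GS (q : ℕ) [NeZero q] {n : ℕ} (M : Matrix (Fin n) (Fin n) ℤ) : ℂ :=
  ∑ x : Fin n → ZMod q, E q (Qf M (fun i => ((x i).val : ℤ)))

lemma eChar_eq (q : ℕ) [NeZero q] (t : ℤ) : eChar q (t : ℝ) = E q t := by
  rw [E, ZMod.stdAddChar_coe, eChar]
  push_cast
  rfl

lemma E_congr {q : ℕ} [NeZero q] {s t : ℤ} (h : (s : ZMod q) = t) : E q s = E q t := by
  rw [E, E, h]

lemma E_add (q : ℕ) [NeZero q] (s t : ℤ) : E q (s + t) = E q s * E q t := by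
  rw [E, E, E, Int.cast_add, AddChar.map_add_eq_mul]

lemma E_mul (m k : ℕ) [NeZero m] [NeZero k] [NeZero (m * k)] (t : ℤ) :
    E (m * k) (m * t) = E k t := by
  rw [E, E, ZMod.stdAddChar_coe, ZMod.stdAddChar_coe]
  congr 1
  have h1 : (m : ℂ) ≠ 0 := by exact_mod_cast NeZero.ne m
  have h2 : (k : ℂ) ≠ 0 := by exact_mod_cast NeZero.ne k
  push_cast
  field_simp

lemma E_mul' (m k : ℕ) [NeZero m] [NeZero k] [NeZero (m * k)] (t : ℤ) :
    E (m * k) (k * t) = E m t := by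
  rw [E, E, ZMod.stdAddChar_coe, ZMod.stdAddChar_coe]
  congr 1
  have h1 : (m : ℂ) ≠ 0 := by exact_mod_cast NeZero.ne m
  have h2 : (k : ℂ) ≠ 0 := by exact_mod_cast NeZero.ne k
  push_cast
  field_simp

lemma Qf_add {n : ℕ} {M : Matrix (Fin n) (Fin n) ℤ} (hM : M.IsSymm) (x y : Fin n → ℤ) :
    Qf M (x + y) = Qf M x + 2 * (x ⬝ᵥ M *ᵥ y) + Qf M y := by
  have : y ⬝ᵥ M *ᵥ x = x ⬝ᵥ M *ᵥ y := by
    rw [dotProduct_mulVec, ← mulVec_transpose, hM.eq, dotProduct_comm]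
  simp only [Qf, mulVec_add, add_dotProduct, dotProduct_add, this]
  ring

lemma Qf_smul {n : ℕ} (M : Matrix (Fin n) (Fin n) ℤ) (k : ℤ) (x : Fin n → ℤ) :
    Qf M (k • x) = k ^ 2 * Qf M x := by
  simp only [Qf, mulVec_smul, smul_dotProduct, dotProduct_smul, smul_eq_mul]
  ring

lemma Qf_smul_left {n : ℕ} (M : Matrix (Fin n) (Fin n) ℤ) (k : ℤ) (x : Fin n → ℤ) :
    Qf (k • M) x = k * Qf M x := by
  simp only [Qf, smul_mulVec, dotProduct_smul, smul_eq_mul]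

lemma dot_cast {q n : ℕ} (x y : Fin n → ℤ) :
    ((x ⬝ᵥ y : ℤ) : ZMod q) = (fun i => (x i : ZMod q)) ⬝ᵥ (fun i => (y i : ZMod q)) := by
  simp [dotProduct]

lemma mulVec_cast {q n : ℕ} (M : Matrix (Fin n) (Fin n) ℤ) (y : Fin n → ℤ) (i : Fin n) :
    (((M *ᵥ y) i : ℤ) : ZMod q) =
      (M.map (Int.cast : ℤ → ZMod q) *ᵥ (fun i => (y i : ZMod q))) i := by
  simp [mulVec, dotProduct]

lemma Qf_cast {q n : ℕ} (M : Matrix (Fin n) (Fin n) ℤ) (y : Fin n → ℤ) :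
    ((Qf M y : ℤ) : ZMod q) = (fun i => (y i : ZMod q)) ⬝ᵥ
      (M.map (Int.cast : ℤ → ZMod q) *ᵥ (fun i => (y i : ZMod q))) := by
  rw [Qf, dot_cast]
  congr 1
  funext i
  exact mulVec_cast M y i

lemma Qf_congr {q n : ℕ} {M : Matrix (Fin n) (Fin n) ℤ} {x y : Fin n → ℤ}
    (h : ∀ i, (x i : ZMod q) = y i) : ((Qf M x : ℤ) : ZMod q) = (Qf M y : ℤ) := by
  rw [Qf_cast, Qf_cast, funext h]

/-- Reparametrisation of a complete sum. -/
lemma sum_reparam {q n : ℕ} [NeZero q] {A : Type*} [Fintype A] (F : (Fin n → ℤ) → ℂ)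
    (hF : ∀ x y : Fin n → ℤ, (∀ i, (x i : ZMod q) = y i) → F x = F y)
    (Φ : A → Fin n → ℤ) (hcard : Fintype.card A = q ^ n)
    (hinj : ∀ a b, (∀ i, (Φ a i : ZMod q) = Φ b i) → a = b) :
    ∑ x : Fin n → ZMod q, F (fun i => ((x i).val : ℤ)) = ∑ a, F (Φ a) := by
  symm
  have hb : Function.Bijective (fun (a : A) (i : Fin n) => (Φ a i : ZMod q)) := by
    rw [Fintype.bijective_iff_injective_and_card]
    refine ⟨fun a b h => hinj a b (fun i => congrFun h i), ?_⟩
    rw [hcard]; simp [ZMod.card]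
  refine Fintype.sum_bijective _ hb _ _ (fun a => ?_)
  apply hF
  intro i
  simp

lemma GS_reparam {q n : ℕ} [NeZero q] {A : Type*} [Fintype A] (M : Matrix (Fin n) (Fin n) ℤ)
    (Φ : A → Fin n → ℤ) (hcard : Fintype.card A = q ^ n)
    (hinj : ∀ a b, (∀ i, (Φ a i : ZMod q) = Φ b i) → a = b) :
    GS q M = ∑ a, E q (Qf M (Φ a)) :=
  sum_reparam (fun x => E q (Qf M x)) (fun _ _ h => E_congr (Qf_congr h)) Φ hcard hinj

lemma val_eq_of_cast {m : ℕ} [NeZero m] (a b : ZMod m) (h : (a.val : ℤ) ≡ b.val [ZMOD m]) :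
    a = b := by
  have := (ZMod.intCast_eq_intCast_iff _ _ _).2 h
  simpa using this

lemma modEq_cancel {m k : ℕ} (h : Nat.Coprime m k) {a b : ℤ}
    (hab : (k : ℤ) * a ≡ k * b [ZMOD m]) : a ≡ b [ZMOD m] := by
  rw [Int.modEq_iff_dvd] at hab ⊢
  rw [← mul_sub] at hab
  exact (Nat.isCoprime_iff_coprime.2 h).dvd_of_dvd_mul_left hab

/-- Digit decomposition. -/
lemma sum_digits (m k n : ℕ) [NeZero m] [NeZero k] [NeZero (m * k)] (F : (Fin n → ℤ) → ℂ)
    (hF : ∀ x y : Fin n → ℤ, (∀ i, (x i : ZMod (m * k)) = y i) → F x = F y) :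
    ∑ x : Fin n → ZMod (m * k), F (fun i => ((x i).val : ℤ)) =
      ∑ y : Fin n → ZMod m, ∑ z : Fin n → ZMod k,
        F ((fun i => ((y i).val : ℤ)) + (m : ℤ) • (fun i => ((z i).val : ℤ))) := by
  rw [← Fintype.sum_prod_type' (f := fun (y : Fin n → ZMod m) (z : Fin n → ZMod k) =>
        F ((fun i => ((y i).val : ℤ)) + (m : ℤ) • (fun i => ((z i).val : ℤ))))]
  apply sum_reparam F hF (fun (a : (Fin n → ZMod m) × (Fin n → ZMod k)) =>
    (fun i => ((a.1 i).val : ℤ)) + (m : ℤ) • (fun i => ((a.2 i).val : ℤ)))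
  · simp [ZMod.card, mul_pow]
  · rintro ⟨y, z⟩ ⟨y', z'⟩ h
    simp only [Pi.add_apply, Pi.smul_apply, smul_eq_mul] at h
    have hy : y = y' := by
      funext i
      have := (ZMod.intCast_eq_intCast_iff _ _ _).1 (h i)
      push_cast at this
      have := this.of_mul_right k
      apply val_eq_of_cast
      simpa [Int.ModEq, Int.add_mul_emod_self_left] using this
    subst hy
    have hz : z = z' := by
      funext i
      have := (ZMod.intCast_eq_intCast_iff _ _ _).1 (h i)
      push_cast at this
      have := Int.ModEq.add_left_cancel' _ this
      apply val_eq_of_cast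
      exact Int.ModEq.mul_left_cancel' (by exact_mod_cast NeZero.ne m) this
    rw [hz]

/-- CRT. -/
lemma GS_crt (m k n : ℕ) [NeZero m] [NeZero k] [NeZero (m * k)] (h : Nat.Coprime m k)
    {M : Matrix (Fin n) (Fin n) ℤ} (hM : M.IsSymm) :
    GS (m * k) M = GS m ((k : ℤ) • M) * GS k ((m : ℤ) • M) := by
  rw [GS_reparam M (fun (a : (Fin n → ZMod m) × (Fin n → ZMod k)) =>
    (k : ℤ) • (fun i => ((a.1 i).val : ℤ)) + (m : ℤ) • (fun i => ((a.2 i).val : ℤ)))]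
  · rw [Fintype.sum_prod_type, GS, GS, Finset.sum_mul_sum]
    refine Finset.sum_congr rfl fun y _ => Finset.sum_congr rfl fun z _ => ?_
    rw [Qf_add hM, Qf_smul, Qf_smul, Qf_smul_left, Qf_smul_left, ← E_mul' m k, ← E_mul m k,
      ← E_add]
    apply E_congr
    have : ((m : ZMod (m * k)) * k) = 0 := by exact_mod_cast ZMod.natCast_self (m * k)
    simp only [smul_dotProduct, mulVec_smul, dotProduct_smul, smul_eq_mul]
    push_cast
    linear_combination (2 * (((fun i => ((y i).val : ℤ)) ⬝ᵥ M *ᵥ (fun i => ((z i).val : ℤ)) : ℤ)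
      : ZMod (m * k))) * this
  · simp [ZMod.card, mul_pow]
  · rintro ⟨y, z⟩ ⟨y', z'⟩ h'
    simp only [Pi.add_apply, Pi.smul_apply, smul_eq_mul] at h'
    have hy : y = y' := by
      funext i
      have := (ZMod.intCast_eq_intCast_iff _ _ _).1 (h' i)
      push_cast at this
      have := this.of_mul_right k
      apply val_eq_of_cast
      rw [Int.ModEq, Int.add_mul_emod_self_left, Int.add_mul_emod_self_left] at this
      exact modEq_cancel h this
    have hz : z = z' := by
      funext i
      have := (ZMod.intCast_eq_intCast_iff _ _ _).1 (h' i)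
      push_cast at this
      have := this.of_mul_left m
      apply val_eq_of_cast
      rw [Int.ModEq, add_comm, Int.add_mul_emod_self_left, add_comm,
        Int.add_mul_emod_self_left] at this
      exact modEq_cancel h.symm this
    rw [hy, hz]

lemma stdAddChar_sum {q n : ℕ} [NeZero q] (f : Fin n → ZMod q) :
    (ZMod.stdAddChar (∑ i, f i) : ℂ) = ∏ i, ZMod.stdAddChar (f i) := by
  induction n with
  | zero => simp
  | succ n ih => rw [Fin.sum_univ_succ, Fin.prod_univ_succ, AddChar.map_add_eq_mul, ih]

lemma E_mul_of (q m k : ℕ) [NeZero q] [NeZero k] (h : q = m * k) (t : ℤ) :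
    E q (m * t) = E k t := by
  subst h
  have : NeZero m := ⟨fun h0 => NeZero.ne (m * k) (by simp [h0])⟩
  exact E_mul m k t

lemma sum_linear (p n : ℕ) [NeZero p] (v : Fin n → ZMod p) :
    ∑ z : Fin n → ZMod p, ZMod.stdAddChar (v ⬝ᵥ z) =
      if v = 0 then ((p : ℂ) ^ n) else 0 := by
  have h1 : ∀ z : Fin n → ZMod p, ZMod.stdAddChar (v ⬝ᵥ z) =
      ∏ i, ZMod.stdAddChar (z i * v i) := by
    intro z
    rw [dotProduct, stdAddChar_sum]
    simp_rw [mul_comm]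
  simp_rw [h1]
  rw [← Fintype.piFinset_univ, ← Finset.prod_univ_sum (fun _ => Finset.univ)
    (fun i (t : ZMod p) => (ZMod.stdAddChar (t * v i) : ℂ))]
  simp_rw [AddChar.sum_mulShift _ (ZMod.isPrimitive_stdAddChar p)]
  split_ifs with h
  · subst h
    simp [ZMod.card]
  · obtain ⟨i, hi⟩ := Function.ne_iff.1 h
    apply Finset.prod_eq_zero (Finset.mem_univ i)
    have : v i ≠ 0 := hi
    simp [this]

lemma GS_sq (p k n : ℕ) [Fact p.Prime] [NeZero k] [NeZero (p * (k * p))] (hp : p ≠ 2)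
    {M : Matrix (Fin n) (Fin n) ℤ} (hM : M.IsSymm) (hdet : (M.det : ZMod p) ≠ 0) :
    GS (p * (k * p)) M = p ^ n * GS k M := by
  have : NeZero p := ⟨(Fact.out : p.Prime).ne_zero⟩
  have : NeZero (k * p) := ⟨mul_ne_zero (NeZero.ne k) (NeZero.ne p)⟩
  set q := p * (k * p) with hq
  have hpk : ((p : ZMod q) * (k * p)) = 0 := by exact_mod_cast ZMod.natCast_self q
  rw [GS, sum_digits p (k * p) n (fun x => E q (Qf M x))
    (fun _ _ h => E_congr (Qf_congr h))]
  have step : ∀ u : Fin n → ZMod p,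
      ∑ y : Fin n → ZMod (k * p),
        E q (Qf M ((fun i => ((u i).val : ℤ)) + (p : ℤ) • (fun i => ((y i).val : ℤ)))) =
      ∑ w : Fin n → ZMod k,
        E q (Qf M ((fun i => ((u i).val : ℤ)) + (p : ℤ) • (fun i => ((w i).val : ℤ)))) *
          (if u = 0 then ((p : ℂ) ^ n) else 0) := by
    intro u
    rw [sum_digits k p n (fun y => E q (Qf M ((fun i => ((u i).val : ℤ)) + (p : ℤ) • y)))]
    · refine Finset.sum_congr rfl fun w _ => ?_
      set A : Fin n → ℤ := (fun i => ((u i).val : ℤ)) + (p : ℤ) • (fun i => ((w i).val : ℤ)) with hA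
      set v : Fin n → ZMod p := (2 : ZMod p) • (M.map (Int.cast : ℤ → ZMod p) *ᵥ u) with hv
      have hAu : (fun i => (A i : ZMod p)) = u := by
        funext i; simp [hA]
      have hv0 : (if u = 0 then ((p : ℂ) ^ n) else 0) = if v = 0 then ((p : ℂ) ^ n) else 0 := by
        congr 1
        apply propext
        constructor
        · intro h; simp [hv, h]
        · intro h
          have h2 : (2 : ZMod p) ≠ 0 := by
            intro h2
            have : ((2 : ℕ) : ZMod p) = 0 := by exact_mod_cast h2
            rw [ZMod.natCast_eq_zero_iff] at this
            exact hp ((Nat.prime_dvd_prime_iff_eq Fact.out Nat.prime_two).1 this)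
          have h3 := (smul_eq_zero.1 h).resolve_left h2
          refine Matrix.eq_zero_of_mulVec_eq_zero (M := M.map (Int.cast : ℤ → ZMod p)) ?_ h3
          have : (M.map (Int.cast : ℤ → ZMod p)).det = (M.det : ZMod p) := by
            have := (Int.castRingHom (ZMod p)).map_det M
            simpa using this.symm
          rwa [this]
      rw [hv0, ← sum_linear, Finset.mul_sum]
      refine Finset.sum_congr rfl fun z _ => ?_
      have e1 : (fun i => ((u i).val : ℤ)) + (p : ℤ) •
          ((fun i => ((w i).val : ℤ)) + (k : ℤ) • (fun i => ((z i).val : ℤ))) =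
          A + ((p : ℤ) * k) • (fun i => ((z i).val : ℤ)) := by
        rw [hA, smul_add, smul_smul, add_assoc]
      have e2 : (ZMod.stdAddChar (v ⬝ᵥ z) : ℂ) =
          E p (2 * (A ⬝ᵥ M *ᵥ (fun i => ((z i).val : ℤ)))) := by
        rw [E]
        congr 1
        have e3 : A ⬝ᵥ M *ᵥ (fun i => ((z i).val : ℤ)) = (M *ᵥ A) ⬝ᵥ (fun i => ((z i).val : ℤ)) := by
          rw [dotProduct_mulVec, ← mulVec_transpose, hM.eq]
        rw [e3, Int.cast_mul, dot_cast, hv, smul_dotProduct]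
        simp_rw [mulVec_cast, hAu]
        simp
      rw [e1, e2, ← E_mul_of q (p * k) p (by rw [hq, mul_assoc]), ← E_add]
      apply E_congr
      rw [Qf_add hM, Qf_smul, mulVec_smul, dotProduct_smul]
      push_cast
      simp only [smul_eq_mul]
      push_cast
      linear_combination (k * ((Qf M (fun i => ((z i).val : ℤ)) : ℤ) : ZMod q)) * hpk
    · intro x y h
      apply E_congr
      apply Qf_congr
      intro i
      simp only [Pi.add_apply, Pi.smul_apply, smul_eq_mul]
      rw [ZMod.intCast_eq_intCast_iff]
      apply Int.ModEq.add_left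
      have := (ZMod.intCast_eq_intCast_iff _ _ _).1 (h i)
      have := this.mul_left' (c := (p : ℤ))
      rw [hq]
      exact_mod_cast this
  simp_rw [step]
  rw [Finset.sum_eq_single (0 : Fin n → ZMod p)]
  · rw [GS, Finset.mul_sum]
    refine Finset.sum_congr rfl fun w _ => ?_
    have : (fun i => (((0 : Fin n → ZMod p) i).val : ℤ)) = 0 := by funext i; simp
    rw [this, zero_add, Qf_smul, if_pos rfl, mul_comm]
    congr 1
    rw [← E_mul_of q (p * p) k (by rw [hq]; ring)]
    apply E_congr
    push_cast
    ring
  · intro b _ hb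
    simp [hb]
  · simp

lemma sum_sq_prime (p : ℕ) [Fact p.Prime] (hp : p ≠ 2) (d : ZMod p) (hd : d ≠ 0) :
    ∑ x : ZMod p, (ZMod.stdAddChar (d * x ^ 2) : ℂ) =
      (quadraticChar (ZMod p) d : ℂ) * ∑ x : ZMod p, (ZMod.stdAddChar (x ^ 2) : ℂ) := by
  have key : ∀ d : ZMod p, d ≠ 0 → ∑ x : ZMod p, (ZMod.stdAddChar (d * x ^ 2) : ℂ) =
      ∑ t : ZMod p, (quadraticChar (ZMod p) t : ℂ) * ZMod.stdAddChar (d * t) := by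
    intro d hd
    rw [← Finset.sum_fiberwise (s := Finset.univ) (g := fun x : ZMod p => x ^ 2)]
    have h1 : ∀ t : ZMod p, ∑ x ∈ Finset.univ.filter (fun x : ZMod p => x ^ 2 = t),
        (ZMod.stdAddChar (d * x ^ 2) : ℂ) =
        (quadraticChar (ZMod p) t : ℂ) * ZMod.stdAddChar (d * t) + ZMod.stdAddChar (t * d) := by
      intro t
      have h2 := quadraticChar_card_sqrts (F := ZMod p) (by rwa [ZMod.ringChar_zmod_n]) t
      rw [Finset.sum_congr rfl (g := fun _ => (ZMod.stdAddChar (d * t) : ℂ))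
        (fun x hx => by rw [(Finset.mem_filter.1 hx).2])]
      rw [Finset.sum_const, nsmul_eq_mul]
      have h3 : ((Finset.univ.filter (fun x : ZMod p => x ^ 2 = t)).card : ℂ) =
          (quadraticChar (ZMod p) t : ℂ) + 1 := by
        have : (((Finset.univ.filter (fun x : ZMod p => x ^ 2 = t)).card : ℤ)) =
          quadraticChar (ZMod p) t + 1 := by
          rw [← h2]; congr 2; ext; simp
        exact_mod_cast this
      rw [h3, mul_comm t d]; ring
    simp_rw [h1]
    rw [Finset.sum_add_distrib, AddChar.sum_mulShift _ (ZMod.isPrimitive_stdAddChar p), if_neg hd]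
    simp
  rw [key d hd]
  have := key 1 one_ne_zero
  simp only [one_mul] at this
  rw [this, Finset.mul_sum]
  symm
  have hd2 : (quadraticChar (ZMod p) d : ℂ) * quadraticChar (ZMod p) d = 1 := by
    have := quadraticChar_sq_one hd
    rw [sq] at this
    exact_mod_cast this
  rw [← Equiv.sum_comp (Equiv.mulLeft₀ d hd)]
  refine Finset.sum_congr rfl fun t _ => ?_
  simp only [Equiv.mulLeft₀_apply, map_mul]
  push_cast
  linear_combination ((quadraticChar (ZMod p) t : ℂ) * ZMod.stdAddChar (d * t)) * hd2

lemma exists_diag {K : Type*} [Field K] (h2 : (2 : K) ≠ 0) {n : ℕ} (M : Matrix (Fin n) (Fin n) K)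
    (hM : M.IsSymm) : ∃ (P : Matrix (Fin n) (Fin n) K) (d : Fin n → K), IsUnit P.det ∧
      Pᵀ * M * P = Matrix.diagonal d := by
  have : Invertible (2 : K) := invertibleOfNonzero h2
  let B : LinearMap.BilinForm K (Fin n → K) := Matrix.toLinearMap₂' K M
  have hB : ∀ x y, B x y = x ⬝ᵥ M *ᵥ y := fun x y => Matrix.toLinearMap₂'_apply' M x y
  have hBs : LinearMap.IsSymm B := ⟨fun x y => by
    simp only [hB, RingHom.id_apply]
    rw [dotProduct_mulVec, ← mulVec_transpose, hM.eq, dotProduct_comm]⟩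
  obtain ⟨v0, hv0⟩ := LinearMap.BilinForm.exists_orthogonal_basis hBs
  have hfr : Module.finrank K (Fin n → K) = n := by simp
  let v := v0.reindex (finCongr hfr)
  have hv : ∀ i j, i ≠ j → B (v i) (v j) = 0 := by
    intro i j hij
    simp only [v, Module.Basis.reindex_apply]
    exact hv0 (by simpa using hij)
  let P : Matrix (Fin n) (Fin n) K := fun i j => v j i
  have hPe : ∀ i j, (Pᵀ * M * P) i j = B (v i) (v j) := by
    intro i j
    rw [hB, Matrix.mul_assoc]
    simp only [Matrix.mul_apply, dotProduct, mulVec]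
    rfl
  refine ⟨P, fun i => B (v i) (v i), ?_, ?_⟩
  · have : P = (Pi.basisFun K (Fin n)).toMatrix v := by
      ext i j; simp [P, Module.Basis.toMatrix_apply]
    rw [this, ← Module.Basis.det_apply]
    exact (Pi.basisFun K (Fin n)).isUnit_det v
  · ext i j
    rw [hPe]
    by_cases h : i = j
    · subst h; simp
    · rw [hv i j h, Matrix.diagonal_apply_ne _ h]

lemma GS_eq_zmod (q : ℕ) [NeZero q] {n : ℕ} (M : Matrix (Fin n) (Fin n) ℤ) :
    GS q M = ∑ x : Fin n → ZMod q,
      ZMod.stdAddChar (x ⬝ᵥ M.map (Int.cast : ℤ → ZMod q) *ᵥ x) := by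
  rw [GS]
  refine Finset.sum_congr rfl fun x _ => ?_
  rw [E, Qf_cast]
  simp

lemma GS_one (q : ℕ) [NeZero q] :
    GS q (1 : Matrix (Fin 1) (Fin 1) ℤ) = ∑ x : ZMod q, ZMod.stdAddChar (x ^ 2) := by
  rw [GS_eq_zmod, ← (Equiv.funUnique (Fin 1) (ZMod q)).symm.sum_comp]
  refine Finset.sum_congr rfl fun x _ => ?_
  simp [sq, dotProduct, Equiv.funUnique]

lemma det_cast {q n : ℕ} (M : Matrix (Fin n) (Fin n) ℤ) :
    (M.map (Int.cast : ℤ → ZMod q)).det = (M.det : ZMod q) := by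
  have := (Int.castRingHom (ZMod q)).map_det M
  simpa using this.symm

lemma GS_prime (p n : ℕ) [NeZero p] [Fact p.Prime] (hp : p ≠ 2)
    {M : Matrix (Fin n) (Fin n) ℤ} (hM : M.IsSymm) (hdet : (M.det : ZMod p) ≠ 0) :
    GS p M = (jacobiSym M.det p : ℂ) * GS p (1 : Matrix (Fin 1) (Fin 1) ℤ) ^ n := by
  have h2 : (2 : ZMod p) ≠ 0 := by
    intro h2
    have : ((2 : ℕ) : ZMod p) = 0 := by exact_mod_cast h2
    rw [ZMod.natCast_eq_zero_iff] at this
    exact hp ((Nat.prime_dvd_prime_iff_eq Fact.out Nat.prime_two).1 this)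
  rw [GS_eq_zmod]
  set N := M.map (Int.cast : ℤ → ZMod p) with hN
  have hNs : N.IsSymm := hM.map _
  obtain ⟨P, d, hP, hd⟩ := exists_diag h2 N hNs
  have hdetN : N.det = (M.det : ZMod p) := det_cast M
  have hprod : P.det ^ 2 * N.det = ∏ i, d i := by
    rw [← Matrix.det_diagonal, ← hd, Matrix.det_mul, Matrix.det_mul, Matrix.det_transpose]
    ring
  have hdi : ∀ i, d i ≠ 0 := by
    have : ∏ i, d i ≠ 0 := by
      rw [← hprod, hdetN]
      exact mul_ne_zero (pow_ne_zero _ hP.ne_zero) hdet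
    intro i
    exact Finset.prod_ne_zero_iff.1 this i (Finset.mem_univ i)
  have hbij : Function.Bijective (fun x : Fin n → ZMod p => P *ᵥ x) := by
    rw [Fintype.bijective_iff_injective_and_card]
    exact ⟨Matrix.mulVec_injective_of_isUnit ((Matrix.isUnit_iff_isUnit_det _).2 hP), rfl⟩
  rw [← Function.Bijective.sum_comp hbij]
  have h1 : ∀ x : Fin n → ZMod p, (ZMod.stdAddChar ((P *ᵥ x) ⬝ᵥ N *ᵥ (P *ᵥ x)) : ℂ) =
      ∏ i, ZMod.stdAddChar (d i * x i ^ 2) := by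
    intro x
    rw [← stdAddChar_sum]
    congr 1
    have : (P *ᵥ x) ⬝ᵥ N *ᵥ (P *ᵥ x) = x ⬝ᵥ (Pᵀ * N * P) *ᵥ x := by
      rw [← Matrix.mulVec_mulVec, ← Matrix.mulVec_mulVec, dotProduct_mulVec x Pᵀ, 
        Matrix.vecMul_transpose]
    rw [this, hd]
    simp only [dotProduct, mulVec_diagonal]
    refine Finset.sum_congr rfl fun i _ => ?_
    ring
  simp_rw [h1]
  rw [← Fintype.piFinset_univ, ← Finset.prod_univ_sum (fun _ => Finset.univ)
    (fun i (t : ZMod p) => (ZMod.stdAddChar (d i * t ^ 2) : ℂ))]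
  simp_rw [fun i => sum_sq_prime p hp (d i) (hdi i)]
  rw [Finset.prod_mul_distrib, ← GS_one, Finset.prod_const, Finset.card_univ, Fintype.card_fin]
  congr 1
  rw [← jacobiSym.legendreSym.to_jacobiSym, legendreSym, ← hdetN]
  rw [← Int.cast_prod, ← map_prod, ← hprod, map_mul, quadraticChar_sq_one' hP.ne_zero, one_mul]

theorem GS_eval (q : ℕ) : ∀ [NeZero q] (_ : Odd q) (n : ℕ) (M : Matrix (Fin n) (Fin n) ℤ),
    M.IsSymm → IsCoprime M.det (q : ℤ) →
    GS q M = (jacobiSym M.det q : ℂ) * GS q (1 : Matrix (Fin 1) (Fin 1) ℤ) ^ n := by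
  induction q using Nat.strong_induction_on with
  | _ q ih =>
  intro _ hodd n M hM hdet
  by_cases hq1 : q = 1
  · subst hq1
    simp [GS_eq_zmod, Subsingleton.elim _ (0 : ZMod 1)]
  · obtain ⟨r, hr⟩ := Nat.minFac_dvd q
    set p := q.minFac with hpdef
    have hpp : p.Prime := Nat.minFac_prime hq1
    have : Fact p.Prime := ⟨hpp⟩
    have : NeZero p := ⟨hpp.ne_zero⟩
    have hq0 : q ≠ 0 := NeZero.ne q
    clear_value p
    subst hr
    have hpodd : Odd p := (Nat.odd_mul.1 hodd).1
    have hrodd : Odd r := (Nat.odd_mul.1 hodd).2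
    have hp2 : p ≠ 2 := by rintro rfl; revert hpodd; decide
    have : NeZero r := ⟨fun h => hq0 (by simp [h])⟩
    have hunit : ∀ x : ℤ, IsCoprime x (p : ℤ) → (x : ZMod p) ≠ 0 := by
      intro x hx h0
      rw [ZMod.intCast_zmod_eq_zero_iff_dvd] at h0
      have := hx.isUnit_of_dvd' h0 dvd_rfl
      exact (Nat.prime_iff_prime_int.1 hpp).not_isUnit this
    push_cast at hdet
    have hdp : IsCoprime M.det (p : ℤ) := hdet.of_mul_right_left
    have hdr : IsCoprime M.det (r : ℤ) := hdet.of_mul_right_right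
    by_cases hpr : p ∣ r
    · obtain ⟨k, rfl⟩ := hpr
      have hk0 : k ≠ 0 := fun h => hq0 (by simp [h])
      have : NeZero k := ⟨hk0⟩
      have hkodd : Odd k := (Nat.odd_mul.1 hrodd).2
      push_cast at hdr
      have hdk : IsCoprime M.det (k : ℤ) := hdr.of_mul_right_right
      have hlt : k < p * (p * k) := by
        have := hpp.two_le
        have hk : 0 < k := Nat.pos_of_ne_zero hk0
        nlinarith [Nat.mul_le_mul this this]
      have hG : ∀ (n : ℕ) (M : Matrix (Fin n) (Fin n) ℤ), M.IsSymm → (M.det : ZMod p) ≠ 0 →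
          GS (p * (p * k)) M = p ^ n * GS k M := by
        intro n M hM hd
        have e : p * k = k * p := mul_comm _ _
        simp only [e]
        have : NeZero (p * (k * p)) := ⟨by rw [← e]; exact hq0⟩
        exact GS_sq p k n hp2 hM hd
      rw [hG n M hM (hunit _ hdp), hG 1 1 Matrix.isSymm_one (by simp),
        ih k hlt hkodd n M hM hdk]
      have hJ : jacobiSym M.det (p * (p * k)) = jacobiSym M.det k := by
        rw [jacobiSym.mul_right, jacobiSym.mul_right, ← mul_assoc, ← sq, jacobiSym.sq_one, one_mul]
        exact Int.isCoprime_iff_gcd_eq_one.1 hdp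
      rw [hJ]
      ring
    · have hcop : Nat.Coprime p r := (Nat.Prime.coprime_iff_not_dvd hpp).2 hpr
      have hcopi : IsCoprime (p : ℤ) (r : ℤ) := Nat.isCoprime_iff_coprime.2 hcop
      have hlt : r < p * r := by
        have := hpp.two_le
        have hk : 0 < r := Nat.pos_of_ne_zero (NeZero.ne r)
        nlinarith
      have hG : ∀ (n : ℕ) (M : Matrix (Fin n) (Fin n) ℤ), M.IsSymm →
          IsCoprime M.det (p : ℤ) → IsCoprime M.det (r : ℤ) →
          GS (p * r) M = ((jacobiSym r p : ℂ) * (jacobiSym p r : ℂ) *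
            GS p (1 : Matrix (Fin 1) (Fin 1) ℤ) * GS r (1 : Matrix (Fin 1) (Fin 1) ℤ)) ^ n
            * (jacobiSym M.det (p * r) : ℂ) := by
        intro n M hM h1 h2
        rw [GS_crt p r n hcop hM, GS_prime p n hp2 (hM.smul _), ih r hlt hrodd n _ (hM.smul _),
          jacobiSym.mul_right]
        · simp only [Matrix.det_smul, Fintype.card_fin, jacobiSym.mul_left, jacobiSym.pow_left]
          push_cast
          ring
        · rw [Matrix.det_smul]
          exact IsCoprime.mul_left hcopi.pow_left h2
        · apply hunit
          rw [Matrix.det_smul]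
          exact IsCoprime.mul_left hcopi.symm.pow_left h1
      rw [hG n M hM hdp hdr, hG 1 1 Matrix.isSymm_one (by simpa using isCoprime_one_left)
        (by simpa using isCoprime_one_left)]
      simp
      ring

lemma isUnit_intCast {q : ℕ} (t : ℤ) : IsUnit (t : ZMod q) ↔ IsCoprime t (q : ℤ) := by
  constructor
  · intro h
    obtain ⟨u, hu⟩ := h.exists_right_inv
    obtain ⟨s, rfl⟩ := ZMod.intCast_surjective u
    have h1 : ((1 : ℤ) : ZMod q) = ((t * s : ℤ) : ZMod q) := by push_cast; exact hu.symm
    obtain ⟨k, hk⟩ := (ZMod.intCast_eq_intCast_iff_dvd_sub _ _ _).1 h1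
    exact ⟨s, -k, by linear_combination hk⟩
  · rintro ⟨u, v, h⟩
    have h1 : ((u * t + v * q : ℤ) : ZMod q) = 1 := by rw [h]; simp
    push_cast at h1
    rw [ZMod.natCast_self, mul_zero, add_zero] at h1
    exact IsUnit.of_mul_eq_one _ ((mul_comm _ _).trans h1)

lemma two_Fint {n : ℕ} {N : Matrix (Fin n) (Fin n) ℤ} (hN : N.IsSymm)
    (heven : ∀ i, Even (N i i)) (x : Fin n → ℤ) : 2 * Fint N x = Qf N x := by
  have hQ : Qf N x = ∑ i, ∑ j, N i j * x i * x j := by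
    simp only [Qf, dotProduct, mulVec, Finset.mul_sum]
    refine Finset.sum_congr rfl fun i _ => Finset.sum_congr rfl fun j _ => ?_
    ring
  rw [hQ, Fint]
  apply Int.mul_ediv_cancel'
  have : ((∑ i, ∑ j, N i j * x i * x j : ℤ) : ZMod 2) = 0 := by
    rw [← Fintype.sum_prod_type' (f := fun i j => N i j * x i * x j)]
    push_cast
    apply Finset.sum_involution (fun ij _ => ij.swap)
    · rintro ⟨i, j⟩ _
      have : N j i = N i j := hN.apply i j
      simp only [Prod.fst_swap, Prod.snd_swap, this]
      have h2 : (2 : ZMod 2) = 0 := rfl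
      linear_combination ((N i j : ZMod 2) * x i * x j) * h2
    · rintro ⟨i, j⟩ _ h0 h
      apply h0
      have hij : i = j := by simpa using (congrArg Prod.snd h)
      subst hij
      have : ((N i i : ℤ) : ZMod 2) = 0 := (ZMod.intCast_zmod_eq_zero_iff_dvd _ 2).2 
        (by exact_mod_cast (heven i).two_dvd)
      simp [this]
    · simp
    · simp
  exact_mod_cast (ZMod.intCast_zmod_eq_zero_iff_dvd _ 2).1 this

lemma dualF_eq {n : ℕ} (N : Matrix (Fin n) (Fin n) ℤ) (c : Fin n → ℤ) :
    dualF N c = c ⬝ᵥ N.adjugate *ᵥ c := by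
  simp only [dualF, dotProduct, mulVec, Finset.mul_sum]
  refine Finset.sum_congr rfl fun i _ => Finset.sum_congr rfl fun j _ => ?_
  ring

lemma iotaSum_eq (q : ℕ) [NeZero q] : iotaSum q = GS q (1 : Matrix (Fin 1) (Fin 1) ℤ) := by
  rw [GS_one, iotaSum, Finset.sum_range]
  have hb : Function.Bijective (fun (i : Fin q) => ((i : ℕ) : ZMod q)) := by
    rw [Fintype.bijective_iff_injective_and_card]
    refine ⟨fun i j h => ?_, by simp [ZMod.card]⟩
    have := (ZMod.natCast_eq_natCast_iff' _ _ _).1 h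
    rw [Nat.mod_eq_of_lt i.2, Nat.mod_eq_of_lt j.2] at this
    exact Fin.ext this
  refine Fintype.sum_bijective _ hb _ _ fun i => ?_
  have := eChar_eq q (((i : ℕ) : ℤ) ^ 2)
  push_cast at this
  rw [this, E]
  push_cast
  rfl

lemma inner_sum (n : ℕ) (NG : Matrix (Fin n) (Fin n) ℤ) (hsym : NG.IsSymm)
    (heven : ∀ i, Even (NG i i)) (m : ℤ) (c : Fin n → ℤ) (q : ℕ) [NeZero q] (hodd : Odd q)
    (hdet : IsCoprime NG.det (q : ℤ)) (a : ℤ) (ha : IsCoprime a (q : ℤ)) :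
    ∑ b : Fin n → Fin q, E q (a * (Fint NG (fun i => ((b i : ℕ) : ℤ)) - m)
        + ∑ i, c i * ((b i : ℕ) : ℤ)) =
    (GS q (1 : Matrix (Fin 1) (Fin 1) ℤ) * (jacobiSym 2 q : ℂ)) ^ n * (jacobiSym NG.det q : ℂ) *
      ((jacobiSym a q : ℂ) ^ n *
        E q (-a * m - ((((2 * a * NG.det : ℤ) : ZMod q)⁻¹).val : ℤ) * dualF NG c)) := by
  have h2c : IsCoprime (2 : ℤ) (q : ℤ) := by
    have := Nat.isCoprime_iff_coprime.2 (Nat.coprime_two_left.2 hodd)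
    exact_mod_cast this
  have hinv : ∀ t : ℤ, IsCoprime t (q : ℤ) → (t : ZMod q) * (t : ZMod q)⁻¹ = 1 := by
    intro t ht
    apply ZMod.mul_inv_of_unit
    exact (isUnit_intCast t).2 ht
  set h : ℤ := ((((2 : ℤ) : ZMod q)⁻¹).val : ℤ) with hh
  have hh2 : (2 : ZMod q) * (h : ZMod q) = 1 := by
    have := hinv 2 h2c
    simpa [hh] using this
  have hhc : IsCoprime h (q : ℤ) := by
    rw [← isUnit_intCast]
    exact IsUnit.of_mul_eq_one _ ((mul_comm _ _).trans hh2)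
  set w : ℤ := ((((2 * a * NG.det : ℤ) : ZMod q)⁻¹).val : ℤ) with hw
  have hw2 : (2 : ZMod q) * a * NG.det * w = 1 := by
    have := hinv (2 * a * NG.det) (IsCoprime.mul_left (IsCoprime.mul_left h2c ha) hdet)
    simpa [hw] using this
  set l : ℤ := a * h with hl
  -- evaluation of the homogeneous sum
  have hGS := GS_eval q hodd n (l • NG) (hsym.smul l) (by
    rw [Matrix.det_smul]
    exact IsCoprime.mul_left (IsCoprime.mul_left ha hhc).pow_left hdet)
  have hJ : jacobiSym h q = jacobiSym 2 q := by
    have h1 : jacobiSym (2 * h) q = 1 := by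
      rw [← jacobiSym.one_left q]
      apply jacobiSym.mod_left'
      apply (ZMod.intCast_eq_intCast_iff _ _ _).1
      push_cast
      exact hh2
    rw [jacobiSym.mul_left] at h1
    have h3 := jacobiSym.sq_one (a := 2) (b := q) (Int.isCoprime_iff_gcd_eq_one.1 h2c)
    calc jacobiSym h q = jacobiSym 2 q ^ 2 * jacobiSym h q := by rw [h3, one_mul]
      _ = jacobiSym 2 q * (jacobiSym 2 q * jacobiSym h q) := by ring
      _ = jacobiSym 2 q := by rw [h1, mul_one]
  rw [Matrix.det_smul, Fintype.card_fin, jacobiSym.mul_left, jacobiSym.pow_left, hl,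
    jacobiSym.mul_left, hJ, ← hl] at hGS
  have goal2 : ∀ X : ℂ, (GS q (1 : Matrix (Fin 1) (Fin 1) ℤ) * (jacobiSym 2 q : ℂ)) ^ n *
      (jacobiSym NG.det q : ℂ) * ((jacobiSym a q : ℂ) ^ n * X) = GS q (l • NG) * X := by
    intro X
    rw [hGS]
    push_cast
    ring
  rw [goal2]
  -- the periodic summand
  let F : (Fin n → ℤ) → ℂ := fun x => E q (l * Qf NG x - a * m + c ⬝ᵥ x)
  have hF : ∀ x y : Fin n → ℤ, (∀ i, (x i : ZMod q) = y i) → F x = F y := by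
    intro x y hxy
    apply E_congr
    push_cast
    rw [Qf_congr hxy, dot_cast, dot_cast, funext hxy]
  have s1 : ∑ b : Fin n → Fin q, E q (a * (Fint NG (fun i => ((b i : ℕ) : ℤ)) - m)
        + ∑ i, c i * ((b i : ℕ) : ℤ)) = ∑ b : Fin n → Fin q, F (fun i => ((b i : ℕ) : ℤ)) := by
    refine Finset.sum_congr rfl fun b _ => ?_
    apply E_congr
    rw [← two_Fint hsym heven, hl, dotProduct]
    push_cast
    linear_combination (-(a : ZMod q) * (Fint NG (fun i => ((b i : ℕ) : ℤ)) : ℤ)) * hh2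
  rw [s1, ← sum_reparam F hF (fun (b : Fin n → Fin q) i => ((b i : ℕ) : ℤ)) (by simp)
    (fun a b hab => by
      funext i
      have := hab i
      push_cast at this
      have := (ZMod.natCast_eq_natCast_iff' _ _ _).1 this
      rw [Nat.mod_eq_of_lt (a i).2, Nat.mod_eq_of_lt (b i).2] at this
      exact Fin.ext this)]
  -- completing the square
  let V : Fin n → ℤ := (-2 * w) • (NG.adjugate *ᵥ c)
  have hNV : NG *ᵥ V = (-2 * w * NG.det) • c := by
    simp only [V, mulVec_smul, mulVec_mulVec, Matrix.mul_adjugate, smul_mulVec, one_mulVec,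
      smul_smul]
  have hcV : c ⬝ᵥ V = -2 * w * dualF NG c := by
    simp only [V, dotProduct_smul, smul_eq_mul, dualF_eq]
  rw [sum_reparam F hF (fun (x : Fin n → ZMod q) => (fun i => ((x i).val : ℤ)) + V)
    (by simp [ZMod.card]) (fun a b hab => by
      funext i
      have := hab i
      simpa using this)]
  rw [GS, Finset.sum_mul]
  refine Finset.sum_congr rfl fun x _ => ?_
  rw [← E_add]
  apply E_congr
  have hQV : Qf NG V = (-2 * w * NG.det) * (-2 * w * dualF NG c) := by
    rw [Qf, hNV, dotProduct_smul, dotProduct_comm, hcV, smul_eq_mul]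
  rw [Qf_add hsym, Qf_smul_left, hQV, hNV, dotProduct_add, hcV, dotProduct_smul, dotProduct_comm _ c,
    smul_eq_mul, hl]
  clear_value w h
  clear hGS goal2 s1 hF hNV hQV hcV
  generalize NG.det = D at *
  push_cast
  generalize ((c ⬝ᵥ (fun i => ((x i).val : ℤ)) : ℤ) : ZMod q) = t
  generalize ((dualF NG c : ℤ) : ZMod q) = d at *
  have e1 : (4 : ZMod q) * a * h * w * D = 1 := by
    linear_combination hh2 * (2 * (a : ZMod q) * D * w) + hw2
  linear_combination (w * d - t) * e1


/-- Lemma 4.3 (evaluation of complete quadratic Gauss–Kloosterman sums):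
for `gcd(q, 2·D_G) = 1`,
`T_q(G,m;c) = (ι_q (2|q))^{n+1} (D_G|q) Σ_{(a,q)=1} (a|q)^{n+1} e_q(−am − w_a N_G(c))`,
where `w_a` is the inverse of `2aD_G` mod `q`. -/
theorem Tq_evaluation (n : ℕ)
    (NG : Matrix (Fin (n+1)) (Fin (n+1)) ℤ) (hsym : NG.IsSymm)
    (heven : ∀ i, Even (NG i i)) (hdet : NG.det ≠ 0)
    (m : ℤ) (c : Fin (n+1) → ℤ) (q : ℕ) (hq : 0 < q)
    (hcop : Int.gcd (q : ℤ) (2 * NG.det) = 1) :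
    Tq n NG q m c
      = (iotaSum q * (jacobiSym 2 q : ℂ))^(n+1) * (jacobiSym NG.det q : ℂ)
          * ∑ a ∈ (Finset.range q).filter (fun a => Nat.gcd a q = 1),
              (jacobiSym (a : ℤ) q : ℂ)^(n+1)
                * eChar q
                    (((-(a : ℤ) * m
                      - ((((2 * (a : ℤ) * NG.det : ℤ) : ZMod q)⁻¹).val : ℤ)
                          * dualF NG c : ℤ) : ℝ)) := by
  have : NeZero q := ⟨hq.ne'⟩
  have hc : IsCoprime (q : ℤ) (2 * NG.det) := Int.isCoprime_iff_gcd_eq_one.2 hcop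
  have hdq : IsCoprime NG.det (q : ℤ) := hc.of_mul_right_right.symm
  have hodd : Odd q := by
    have h2 : IsCoprime ((2 : ℕ) : ℤ) (q : ℤ) := by exact_mod_cast hc.of_mul_right_left.symm
    exact Nat.coprime_two_left.1 (Nat.isCoprime_iff_coprime.1 h2)
  rw [Tq, iotaSum_eq, Finset.mul_sum]
  refine Finset.sum_congr rfl fun a ha => ?_
  have hac : IsCoprime (a : ℤ) (q : ℤ) :=
    Nat.isCoprime_iff_coprime.2 (Finset.mem_filter.1 ha).2
  simp only [eChar_eq]
  exact inner_sum (n + 1) NG hsym heven m c q hodd hdq a hac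

end Quad
end
end
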